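/- arXiv:1711.09794 — 7 statements merged into one kernel-verified Lean document; each statement's English description precedes it below -/
import Mathlib

section
/- The shifted-conjugation operation on the infinite braid group obeys the left selfdistributivity law: for all β₁, β₂, β₃ ∈ B_∞ one has β₁ ▷ (β₂ ▷ β₃) = (β₁ ▷ β₂) ▷ (β₁ ▷ β₃). Moreover (B_∞, ▷) is not a left-spindle: β ▷ β ≠ β holds for every β ∈ B_∞; and it is not a left-rack: there is no β ∈ B_∞ with 1 ▷ β = 1, so the left translation y ↦ 1 ▷ y is not surjective. -/
/-- The braid relations on generators indexed by `ℕ` (generator `i` stands for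
the Artin generator `σ_{i+1}` of the paper). -/
def braidRels : Set (FreeGroup ℕ) :=
  {r | (∃ i j : ℕ, i + 2 ≤ j ∧
          r = .of i * .of j * (.of i)⁻¹ * (.of j)⁻¹) ∨
       (∃ i : ℕ,
          r = .of i * .of (i + 1) * .of i *
              (.of (i + 1) * .of i * .of (i + 1))⁻¹)}

/-- The braid group on infinitely many strands. -/
abbrev Binf : Type := PresentedGroup braidRels

/-- `σ i` is the Artin generator `σ_{i+1}` of the paper (0-indexed). -/
def σ (i : ℕ) : Binf := PresentedGroup.of i

lemma mk_rel_eq_one {r : FreeGroup ℕ} (h : r ∈ braidRels) :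
    PresentedGroup.mk braidRels r = 1 :=
  (QuotientGroup.eq_one_iff r).mpr (Subgroup.subset_normalClosure h)

lemma shift_lift_eq_one :
    ∀ r ∈ braidRels, FreeGroup.lift (fun n => σ (n + 1)) r = 1 := by
  intro r hr
  have key : ∀ s ∈ braidRels, FreeGroup.lift (fun n => σ (n + 1)) s
      = PresentedGroup.mk braidRels (FreeGroup.map (· + 1) s) := by
    intro s _
    have : (FreeGroup.lift (fun n => σ (n + 1)) : FreeGroup ℕ →* Binf)
        = (PresentedGroup.mk braidRels).comp (FreeGroup.map (· + 1)) := by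
      apply FreeGroup.ext_hom
      intro x
      simp [σ, PresentedGroup.of]
    rw [this]; rfl
  rw [key r hr]
  apply mk_rel_eq_one
  rcases hr with ⟨i, j, hij, rfl⟩ | ⟨i, rfl⟩
  · exact Or.inl ⟨i + 1, j + 1, by omega, by simp⟩
  · exact Or.inr ⟨i + 1, by simp⟩

/-- The shift endomorphism of the braid group, mapping `σ i` to `σ (i+1)`. -/
def sh : Binf →* Binf := PresentedGroup.toGroup shift_lift_eq_one

@[simp] lemma sh_σ (i : ℕ) : sh (σ i) = σ (i + 1) :=
  PresentedGroup.toGroup.of shift_lift_eq_one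

/-- The shifted-conjugation (selfdistributive) operation on `Binf`:
`β₁ ▷ β₂ = β₁ · sh β₂ · σ₁ · (sh β₁)⁻¹`. -/
def sc (β₁ β₂ : Binf) : Binf := β₁ * sh β₂ * σ 0 * (sh β₁)⁻¹

lemma σ_braid (i : ℕ) : σ i * σ (i + 1) * σ i = σ (i + 1) * σ i * σ (i + 1) := by
  have h := mk_rel_eq_one (r := .of i * .of (i + 1) * .of i *
              (.of (i + 1) * .of i * .of (i + 1))⁻¹) (Or.inr ⟨i, rfl⟩)
  rw [map_mul, map_inv, mul_inv_eq_one] at h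
  simp only [map_mul] at h
  exact h

lemma σ_comm (i j : ℕ) (hij : i + 2 ≤ j) : σ i * σ j = σ j * σ i := by
  have h := mk_rel_eq_one (r := .of i * .of j * (.of i)⁻¹ * (.of j)⁻¹)
    (Or.inl ⟨i, j, hij, rfl⟩)
  rw [map_mul, map_inv, mul_inv_eq_one, map_mul, map_inv, mul_inv_eq_iff_eq_mul] at h
  simp only [map_mul] at h
  exact h

lemma binf_mem (H : Subgroup Binf) (h : ∀ i, σ i ∈ H) (b : Binf) : b ∈ H := by
  have h1 : Subgroup.closure (Set.range (PresentedGroup.of (rels := braidRels))) ≤ H := by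
    rw [Subgroup.closure_le]
    rintro _ ⟨i, rfl⟩
    exact h i
  rw [PresentedGroup.closure_range_of] at h1
  exact h1 (Subgroup.mem_top b)

lemma σ_comm_sh (b : Binf) : σ 0 * sh (sh b) = sh (sh b) * σ 0 := by
  have h := binf_mem ((Subgroup.centralizer {σ 0}).comap (sh.comp sh)) (fun i => by
    rw [Subgroup.mem_comap, Subgroup.mem_centralizer_singleton_iff]
    simpa using (σ_comm 0 (i + 1 + 1) (by omega)).symm) b
  rw [Subgroup.mem_comap, Subgroup.mem_centralizer_singleton_iff] at h
  exact h.symm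

lemma perm_rels : ∀ r ∈ braidRels,
    FreeGroup.lift (fun n : ℕ => Equiv.swap n (n + 1)) r = 1 := by
  rintro r (⟨i, j, hij, rfl⟩ | ⟨i, rfl⟩)
  · simp only [map_mul, map_inv, FreeGroup.lift_apply_of]
    rw [mul_inv_eq_one, mul_inv_eq_iff_eq_mul]
    ext x
    simp only [Equiv.Perm.mul_apply, Equiv.swap_apply_def]
    grind
  · simp only [map_mul, map_inv, FreeGroup.lift_apply_of]
    rw [mul_inv_eq_one]
    ext x
    simp only [Equiv.Perm.mul_apply, Equiv.swap_apply_def]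
    grind

def permHom : Binf →* Equiv.Perm ℕ := PresentedGroup.toGroup perm_rels

lemma permHom_σ (i : ℕ) : permHom (σ i) = Equiv.swap i (i + 1) :=
  PresentedGroup.toGroup.of perm_rels

lemma permHom_sh (b : Binf) : permHom (sh b) 0 = 0 := by
  have h := binf_mem ((MulAction.stabilizer (Equiv.Perm ℕ) (0 : ℕ)).comap (permHom.comp sh))
    (fun i => by
      rw [Subgroup.mem_comap, MulAction.mem_stabilizer_iff]
      simp only [MonoidHom.comp_apply, sh_σ, permHom_σ, Equiv.Perm.smul_def]
      exact Equiv.swap_apply_of_ne_of_ne (by omega) (by omega)) b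
  exact h

lemma σ_ne_sh (b : Binf) : σ 0 ≠ sh b := by
  intro h
  have h1 := permHom_sh b
  rw [← h, permHom_σ] at h1
  simp at h1

lemma sc_distrib (a b c : Binf) : sc a (sc b c) = sc (sc a b) (sc a c) := by
  have hb := σ_braid 0
  have h1 : σ 0 * σ 1 * σ 0 * (σ 1)⁻¹ = σ 1 * σ 0 := by
    rw [mul_inv_eq_iff_eq_mul]; exact hb
  have ha : (sh (sh a))⁻¹ * σ 0 * sh (sh a) = σ 0 := by
    rw [mul_assoc, σ_comm_sh, inv_mul_cancel_left]
  have hbi : (sh (sh b))⁻¹ * σ 0 = σ 0 * (sh (sh b))⁻¹ := by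
    rw [inv_mul_eq_iff_eq_mul, ← mul_assoc, ← σ_comm_sh, mul_inv_cancel_right]
  simp only [sc, map_mul, map_inv, sh_σ, zero_add]
  calc _ = a * sh b * sh (sh c) * σ 1 * ((sh (sh b))⁻¹ * σ 0) * (sh a)⁻¹ := by group
    _ = a * sh b * sh (sh c) * (σ 1 * σ 0) * (sh (sh b))⁻¹ * (sh a)⁻¹ := by
      rw [hbi]; group
    _ = a * sh b * (sh (sh c) * σ 0) * σ 1 * σ 0 * (σ 1)⁻¹ * (sh (sh b))⁻¹ * (sh a)⁻¹ := by
      rw [← h1]; group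
    _ = a * sh b * (σ 0 * sh (sh c)) * σ 1 * ((sh (sh a))⁻¹ * σ 0 * sh (sh a)) * (σ 1)⁻¹
        * (sh (sh b))⁻¹ * (sh a)⁻¹ := by
      rw [ha, σ_comm_sh]
    _ = _ := by group

/-- `(Binf, sc)` is a left-shelf that is neither a left-spindle
nor a left-rack. -/
theorem braid_shelf_basic :
    (∀ β₁ β₂ β₃ : Binf, sc β₁ (sc β₂ β₃) = sc (sc β₁ β₂) (sc β₁ β₃)) ∧
    (∀ β : Binf, sc β β ≠ β) ∧
    (¬ ∃ β : Binf, sc 1 β = 1) ∧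
    ¬ Function.Surjective (fun y : Binf => sc 1 y) := by
  have h3 : ¬ ∃ β : Binf, sc 1 β = 1 := by
    rintro ⟨b, hb⟩
    simp only [sc, map_one, one_mul, inv_one, mul_one] at hb
    apply σ_ne_sh b⁻¹
    rw [map_inv]
    exact eq_inv_of_mul_eq_one_right hb
  refine ⟨sc_distrib, ?_, h3, fun h => h3 (h 1)⟩
  intro b hb
  apply σ_ne_sh 1
  have h : sh b * σ 0 * (sh b)⁻¹ = 1 := by
    simpa only [sc, mul_assoc, mul_eq_left] using hb
  rw [map_one]
  rwa [mul_inv_eq_one, mul_eq_left] at h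
end

section
/- For all β, γ ∈ B_∞, the braid γ lies in the image of the left translation L_β : y ↦ β ▷ y (that is, there exists β' ∈ B_∞ with β ▷ β' = γ) if and only if β ▷ γ = (β ▷ β) ▷ γ. -/
/-! ### The positive braid monoid -/

namespace BraidAux

/-- One application of a braid relation inside a positive word. -/
inductive Step : List ℕ → List ℕ → Prop
  | comm (i j : ℕ) (t : List ℕ) (h : i + 2 ≤ j ∨ j + 2 ≤ i) : Step (i :: j :: t) (j :: i :: t)
  | braid (i j : ℕ) (t : List ℕ) (h : i + 1 = j ∨ j + 1 = i) :
      Step (i :: j :: i :: t) (j :: i :: j :: t)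
  | cons (i : ℕ) {s t : List ℕ} (h : Step s t) : Step (i :: s) (i :: t)

lemma Step.symm {s t : List ℕ} (h : Step s t) : Step t s := by
  induction h with
  | comm i j t h => exact Step.comm j i t h.symm
  | braid i j t h => exact Step.braid j i t h.symm
  | cons i _ ih => exact Step.cons i ih

lemma Step.append_right {s t : List ℕ} (h : Step s t) (u : List ℕ) : Step (s ++ u) (t ++ u) := by
  induction h with
  | comm i j t h => exact Step.comm i j _ h
  | braid i j t h => exact Step.braid i j _ h
  | cons i _ ih => exact Step.cons i ih

lemma Step.append_left {s t : List ℕ} (h : Step s t) (u : List ℕ) : Step (u ++ s) (u ++ t) := by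
  induction u with
  | nil => exact h
  | cons i _ ih => exact Step.cons i ih

/-- Equivalence of positive words. -/
def Eqv : List ℕ → List ℕ → Prop := Relation.ReflTransGen Step

lemma Eqv.symm {s t : List ℕ} (h : Eqv s t) : Eqv t s := by
  induction h with
  | refl => exact Relation.ReflTransGen.refl
  | tail _ h ih => exact Relation.ReflTransGen.head h.symm ih

lemma Eqv.append {s t s' t' : List ℕ} (h : Eqv s t) (h' : Eqv s' t') :
    Eqv (s ++ s') (t ++ t') := by
  have h1 : Eqv (s ++ s') (t ++ s') :=
    Relation.ReflTransGen.lift (· ++ s') (fun _ _ hab => Step.append_right hab s') _ _ h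
  have h2 : Eqv (t ++ s') (t ++ t') :=
    Relation.ReflTransGen.lift (t ++ ·) (fun _ _ hab => Step.append_left hab t) _ _ h'
  exact Relation.ReflTransGen.trans h1 h2

/-- The braid congruence on positive words. -/
def braidCon : Con (FreeMonoid ℕ) where
  r a b := Eqv a.toList b.toList
  iseqv :=
    { refl := fun _ => Relation.ReflTransGen.refl
      symm := fun h => Eqv.symm h
      trans := fun h h' => Relation.ReflTransGen.trans h h' }
  mul' := fun h k => by
    simpa only [FreeMonoid.toList_mul] using Eqv.append h k

/-- The positive braid monoid. -/
abbrev M : Type := braidCon.Quotient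

/-- generators -/
def g (i : ℕ) : M := ((FreeMonoid.of i : FreeMonoid ℕ) : M)

/-- The element of a word. -/
def mkw (l : List ℕ) : M := ((FreeMonoid.ofList l : FreeMonoid ℕ) : M)

lemma mkw_nil : mkw [] = 1 := rfl

lemma mkw_cons (i : ℕ) (l : List ℕ) : mkw (i :: l) = g i * mkw l := rfl

lemma mkw_surj (x : M) : ∃ l, mkw l = x := by
  induction x using Con.induction_on with
  | H w => exact ⟨w.toList, rfl⟩

lemma mkw_eq {s t : List ℕ} : mkw s = mkw t ↔ Eqv s t := by
  unfold mkw
  rw [Con.eq]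
  rfl

lemma M.ind {p : M → Prop} (one : p 1) (cons : ∀ i x, p x → p (g i * x)) (x : M) : p x := by
  obtain ⟨l, rfl⟩ := mkw_surj x
  induction l with
  | nil => exact one
  | cons i l ih => exact cons i _ ih

/-- universal property -/
def liftM {N : Type*} [Monoid N] (f : ℕ → N)
    (hc : ∀ i j, i + 2 ≤ j → f i * f j = f j * f i)
    (hb : ∀ i, f i * f (i + 1) * f i = f (i + 1) * f i * f (i + 1)) : M →* N :=
  Con.lift braidCon (FreeMonoid.lift f) (by
    intro a b h
    rw [Con.ker_rel]
    have h' : Eqv a.toList b.toList := h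
    have key : ∀ s t : List ℕ, Step s t → (s.map f).prod = (t.map f).prod := by
      intro s t hst
      induction hst with
      | comm i j t h =>
        have : f i * f j = f j * f i := by
          rcases h with h | h
          · exact hc i j h
          · exact (hc j i h).symm
        simp only [List.map_cons, List.prod_cons, ← mul_assoc, this]
      | braid i j t h =>
        have : f i * f j * f i = f j * f i * f j := by
          rcases h with rfl | rfl
          · exact hb i
          · exact (hb j).symm
        simp only [List.map_cons, List.prod_cons, ← mul_assoc, this]
      | cons i _ ih => simp only [List.map_cons, List.prod_cons, ih]
    rw [FreeMonoid.lift_apply, FreeMonoid.lift_apply]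
    generalize a.toList = s, b.toList = t at h'
    induction h' with
    | refl => rfl
    | tail _ hst ih => exact ih.trans (key _ _ hst))

@[simp] lemma liftM_g {N : Type*} [Monoid N] (f : ℕ → N) (hc hb) (i : ℕ) :
    liftM f hc hb (g i) = f i := by
  unfold liftM g
  rw [Con.lift_coe]
  simp

lemma g_far {i j : ℕ} (h : i + 2 ≤ j ∨ j + 2 ≤ i) (x : M) :
    g i * (g j * x) = g j * (g i * x) := by
  obtain ⟨l, rfl⟩ := mkw_surj x
  simp only [← mkw_cons]
  exact mkw_eq.2 (Relation.ReflTransGen.single (Step.comm i j l h))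

lemma g_adj {i j : ℕ} (h : i + 1 = j ∨ j + 1 = i) (x : M) :
    g i * (g j * (g i * x)) = g j * (g i * (g j * x)) := by
  obtain ⟨l, rfl⟩ := mkw_surj x
  simp only [← mkw_cons]
  exact mkw_eq.2 (Relation.ReflTransGen.single (Step.braid i j l h))

/-- length -/
def lenHom : M →* Multiplicative ℕ :=
  liftM (fun _ => Multiplicative.ofAdd 1) (fun _ _ _ => rfl) (fun _ => rfl)

/-- length -/
def len (x : M) : ℕ := (lenHom x).toAdd

@[simp] lemma len_g_mul (i : ℕ) (x : M) : len (g i * x) = len x + 1 := by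
  simp [len, lenHom, add_comm]

/-- Conclusion of the key lemma. -/
def K (i j : ℕ) (x y : M) : Prop :=
  (i = j ∧ x = y) ∨ ((i + 2 ≤ j ∨ j + 2 ≤ i) ∧ ∃ z, x = g j * z ∧ y = g i * z) ∨
  ((i + 1 = j ∨ j + 1 = i) ∧ ∃ z, x = g j * (g i * z) ∧ y = g i * (g j * z))

lemma K.symm {i j : ℕ} {x y : M} (h : K i j x y) : K j i y x := by
  rcases h with ⟨h, h'⟩ | ⟨h, z, h1, h2⟩ | ⟨h, z, h1, h2⟩
  · exact Or.inl ⟨h.symm, h'.symm⟩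
  · exact Or.inr (Or.inl ⟨h.symm, z, h2, h1⟩)
  · exact Or.inr (Or.inr ⟨h.symm, z, h2, h1⟩)

/-- The key lemma for elements of length `< n`. -/
def KL (n : ℕ) : Prop := ∀ i j a b, len a < n → g i * a = g j * b → K i j a b

lemma KL.cancel {n : ℕ} (H : KL n) {i : ℕ} {a b : M} (hl : len a < n) (h : g i * a = g i * b) :
    a = b := by
  rcases H i i a b hl h with ⟨_, h⟩ | ⟨h, _⟩ | ⟨h, _⟩
  · exact h
  · omega
  · omega

lemma KL.far {n : ℕ} (H : KL n) {i j : ℕ} (hij : i + 2 ≤ j ∨ j + 2 ≤ i) {a b : M} (hl : len a < n)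
    (h : g i * a = g j * b) : ∃ z, a = g j * z ∧ b = g i * z := by
  rcases H i j a b hl h with ⟨h, _⟩ | ⟨_, h⟩ | ⟨h, _⟩
  · omega
  · exact h
  · omega

lemma KL.adj {n : ℕ} (H : KL n) {i j : ℕ} (hij : i + 1 = j ∨ j + 1 = i) {a b : M} (hl : len a < n)
    (h : g i * a = g j * b) : ∃ z, a = g j * (g i * z) ∧ b = g i * (g j * z) := by
  rcases H i j a b hl h with ⟨h, _⟩ | ⟨h, _⟩ | ⟨_, h⟩
  · omega
  · omega
  · exact h

lemma K_AF {n : ℕ} (H : KL n) {i j k : ℕ} {p q : M} (hij : i ≠ j)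
    (hik : i + 1 = k ∨ k + 1 = i) (hkj : k + 2 ≤ j ∨ j + 2 ≤ k) (hl : len p + 2 ≤ n)
    (h : g i * (g k * p) = g j * q) : K i j (g k * (g i * p)) (g k * q) := by
  rcases H i j _ _ (by simp; omega) h with ⟨h, _⟩ | ⟨hij, r, h1, rfl⟩ | ⟨hij, r, h1, rfl⟩
  · exact absurd h hij
  · obtain ⟨s, rfl, rfl⟩ := H.far hkj (by omega) h1
    refine Or.inr (Or.inl ⟨hij, g k * (g i * s), ?_, ?_⟩)
    · rw [g_far hij, g_far hkj]
    · rw [g_adj hik]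
  · obtain ⟨s, rfl, h2⟩ := H.far hkj (by omega) h1
    have e := congrArg len h1
    simp at e hl
    obtain ⟨t, rfl, rfl⟩ := H.adj hik (by omega) h2
    refine Or.inr (Or.inr ⟨hij, g k * (g i * (g j * t)), ?_, ?_⟩)
    · rw [g_adj hij, g_far hkj, g_far hkj.symm t, g_adj hik.symm]
    · rw [g_far hkj.symm, g_adj hik.symm, g_adj hij, g_far hkj]

lemma K_trans {n : ℕ} (H : KL n) {i j k : ℕ} {x y z : M} (hx : len x = n) (hy : len y = n)
    (h1 : K i k x z) (h2 : K k j z y) : K i j x y := by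
  rcases h1 with ⟨rfl, rfl⟩ | ⟨hik, p, rfl, rfl⟩ | ⟨hik, p, rfl, rfl⟩
  · exact h2
  · simp at hx
    rcases h2 with ⟨rfl, rfl⟩ | ⟨hkj, q, h2, rfl⟩ | ⟨hkj, q, h2, rfl⟩
    · exact Or.inr (Or.inl ⟨hik, p, rfl, rfl⟩)
    · rcases H i j _ _ (by omega) h2 with ⟨rfl, rfl⟩ | ⟨hij, r, rfl, rfl⟩ | ⟨hij, r, rfl, rfl⟩
      · exact Or.inl ⟨rfl, rfl⟩
      · exact Or.inr (Or.inl ⟨hij, g k * r, by rw [g_far hkj], by rw [g_far hik]⟩)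
      · refine Or.inr (Or.inr ⟨hij, g k * r, ?_, ?_⟩)
        · rw [g_far hkj, g_far hik]
        · rw [g_far hik.symm, g_far hkj]
    · simp at hy
      exact (K_AF H (by omega) hkj.symm hik.symm (by omega) h2.symm).symm
  · simp at hx
    rcases h2 with ⟨rfl, rfl⟩ | ⟨hkj, q, h2, rfl⟩ | ⟨hkj, q, h2, rfl⟩
    · exact Or.inr (Or.inr ⟨hik, p, rfl, rfl⟩)
    · exact K_AF H (by omega) hik hkj (by omega) h2
    · by_cases hij : i = j
      · subst hij
        have e := H.cancel (by simp; omega) h2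
        have e := H.cancel (by omega) e
        exact Or.inl ⟨rfl, by rw [e]⟩
      · have hij' : i + 2 ≤ j ∨ j + 2 ≤ i := by omega
        obtain ⟨w, e1, e2⟩ := H.far hij' (by simp; omega) h2
        have l1 := congrArg len e1
        have l2 := congrArg len e2
        simp at hy l1 l2
        obtain ⟨w1, rfl, rfl⟩ := H.adj hkj (by omega) e1
        obtain ⟨w2, rfl, e3⟩ := H.adj hik.symm (by omega) e2
        simp at hx hy
        have e4 := H.cancel (by simp; omega) e3
        obtain ⟨w3, rfl, rfl⟩ := H.far hij'.symm (by omega) e4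
        refine Or.inr (Or.inl ⟨hij', g k * (g j * (g i * (g k * w3))), ?_, ?_⟩)
        · rw [g_far hij', g_adj hik, g_adj hkj]
        · rw [g_far hij'.symm, g_adj hkj.symm, g_adj hik.symm, g_far hij']

lemma Step.len_eq {s t : List ℕ} (h : Step s t) : len (mkw s) = len (mkw t) := by
  rw [mkw_eq.2 (Relation.ReflTransGen.single h)]

lemma K_step {i j : ℕ} {s t : List ℕ} (h : Step (i :: s) (j :: t)) : K i j (mkw s) (mkw t) := by
  cases h with
  | comm _ _ t h => exact Or.inr (Or.inl ⟨h, mkw t, rfl, rfl⟩)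
  | braid _ _ t h => exact Or.inr (Or.inr ⟨h, mkw t, rfl, rfl⟩)
  | cons _ h => exact Or.inl ⟨rfl, mkw_eq.2 (Relation.ReflTransGen.single h)⟩

lemma KL_all (n : ℕ) : KL n := by
  induction n with
  | zero => intro i j a b h; omega
  | succ n ih =>
    intro i j a b hl h
    by_cases hn : len a < n
    · exact ih i j a b hn h
    have hn : len a = n := by omega
    obtain ⟨s, rfl⟩ := mkw_surj a
    obtain ⟨t, rfl⟩ := mkw_surj b
    rw [← mkw_cons, ← mkw_cons, mkw_eq] at h
    have key : ∀ w, Eqv (i :: s) w → ∃ k u, w = k :: u ∧ len (mkw u) = n ∧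
        K i k (mkw s) (mkw u) := by
      intro w hw
      induction hw with
      | refl => exact ⟨i, s, rfl, hn, Or.inl ⟨rfl, rfl⟩⟩
      | @tail b c _ hst ih' =>
        obtain ⟨k, u, rfl, hu, hK⟩ := ih'
        have hlen := hst.len_eq
        cases c with
        | nil => cases hst
        | cons m c =>
          rw [mkw_cons, mkw_cons, len_g_mul, len_g_mul] at hlen
          exact ⟨m, c, rfl, by omega, K_trans ih hn (by omega) hK (K_step hst)⟩
    obtain ⟨k, u, e, hu, hK⟩ := key _ h
    cases e
    exact hK

lemma key {i j : ℕ} {a b : M} (h : g i * a = g j * b) : K i j a b :=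
  KL_all (len a + 1) i j a b (by omega) h

lemma g_cancel {i : ℕ} {a b : M} (h : g i * a = g i * b) : a = b :=
  (KL_all (len a + 1)).cancel (by omega) h

lemma mul_left_cancel' (c : M) {a b : M} (h : c * a = c * b) : a = b := by
  induction c using M.ind with
  | one => simpa using h
  | cons i x ih =>
    rw [mul_assoc, mul_assoc] at h
    exact ih (g_cancel h)

lemma g_far' {i j : ℕ} (h : i + 2 ≤ j ∨ j + 2 ≤ i) : g i * g j = g j * g i := by
  simpa using g_far h 1

lemma g_adj' {i j : ℕ} (h : i + 1 = j ∨ j + 1 = i) : g i * g j * g i = g j * g i * g j := by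
  simpa [mul_assoc] using g_adj h 1

/-- word reversal -/
def rev : M →* Mᵐᵒᵖ :=
  liftM (fun i => MulOpposite.op (g i))
    (fun i j h => by
      rw [← MulOpposite.op_mul, ← MulOpposite.op_mul, g_far' (Or.inl h)])
    (fun i => by
      simp only [← MulOpposite.op_mul]
      rw [← mul_assoc, ← mul_assoc, g_adj' (Or.inl rfl)])

/-- word reversal as a function -/
def rv (x : M) : M := (rev x).unop

lemma rv_mul (x y : M) : rv (x * y) = rv y * rv x := by simp [rv]
lemma rv_one : rv 1 = 1 := by simp [rv]
lemma rv_g (i : ℕ) : rv (g i) = g i := by simp [rv, rev]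

lemma rv_rv (x : M) : rv (rv x) = x := by
  induction x using M.ind with
  | one => simp [rv_one]
  | cons i x ih => simp [rv_mul, rv_g, ih]

lemma mul_right_cancel' (c : M) {a b : M} (h : a * c = b * c) : a = b := by
  have h := congrArg rv h
  rw [rv_mul, rv_mul] at h
  have := congrArg rv (mul_left_cancel' _ h)
  simpa [rv_rv] using this

/-- the shift on the monoid -/
def shM : M →* M :=
  liftM (fun i => g (i + 1)) (fun i j h => g_far' (by omega)) (fun i => g_adj' (by omega))

@[simp] lemma shM_g (i : ℕ) : shM (g i) = g (i + 1) := by simp [shM]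

/-- `g 0 * ... * g (n-1)` -/
def A : ℕ → M
  | 0 => 1
  | n + 1 => A n * g n

lemma A_far (n m : ℕ) (h : n + 1 ≤ m) : A n * g m = g m * A n := by
  induction n with
  | zero => simp [A]
  | succ n ih =>
    rw [A, mul_assoc, g_far' (by omega), ← mul_assoc, ih (by omega), mul_assoc]

lemma A_g (n i : ℕ) (h : i + 2 ≤ n) : A n * g i = g (i + 1) * A n := by
  induction n with
  | zero => omega
  | succ n ih =>
    by_cases hi : i + 2 ≤ n
    · rw [A, mul_assoc, g_far' (by omega), ← mul_assoc, ih hi, mul_assoc]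
    · obtain rfl : n = i + 1 := by omega
      simp only [A]
      have : A i * g i * g (i + 1) * g i = A i * (g i * g (i + 1) * g i) := by
        simp only [mul_assoc]
      rw [this, g_adj' (Or.inl rfl), ← mul_assoc, ← mul_assoc, A_far _ _ (by omega)]
      simp only [mul_assoc]

lemma A_shift (x : M) : ∃ N, ∀ n, N ≤ n → A n * x = shM x * A n := by
  induction x using M.ind with
  | one => exact ⟨0, by simp⟩
  | cons i x ih =>
    obtain ⟨N, hN⟩ := ih
    refine ⟨max N (i + 2), fun n hn => ?_⟩
    rw [← mul_assoc, A_g n i (by omega), mul_assoc, hN n (by omega), map_mul, shM_g, mul_assoc]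

lemma shM_inj {x y : M} (h : shM x = shM y) : x = y := by
  obtain ⟨N, hN⟩ := A_shift x
  obtain ⟨N', hN'⟩ := A_shift y
  have h1 := hN (max N N') (by omega)
  have h2 := hN' (max N N') (by omega)
  rw [h, ← h2] at h1
  have h3 := mul_left_cancel' _ h1
  exact h3

/-- Garside elements -/
def D : ℕ → M
  | 0 => 1
  | n + 1 => A (n + 1) * D n

lemma A_succ_shift (n : ℕ) : A (n + 1) = g 0 * shM (A n) := by
  induction n with
  | zero => simp [A]
  | succ n ih =>
    have e1 : A (n + 1 + 1) = A (n + 1) * g (n + 1) := rfl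
    have e2 : A (n + 1) = A n * g n := rfl
    rw [e1, ih, mul_assoc, ← shM_g, ← map_mul, ← e2, ih]

lemma A_A (n m : ℕ) (h : m + 1 ≤ n) : A n * A m = shM (A m) * A n := by
  induction m with
  | zero => simp [A]
  | succ m ih =>
    rw [A, ← mul_assoc, ih (by omega), mul_assoc, A_g _ _ (by omega), map_mul, shM_g, mul_assoc]

lemma D_far (n m : ℕ) (h : n + 1 ≤ m) : D n * g m = g m * D n := by
  induction n with
  | zero => simp [D]
  | succ n ih =>
    rw [D, mul_assoc, ih (by omega), ← mul_assoc, A_far _ _ h, mul_assoc]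

lemma D_flip (n : ℕ) : ∀ i, i < n → g i * D n = D n * g (n - 1 - i) := by
  induction n with
  | zero => intro i hi; omega
  | succ n ih =>
    intro i hi
    cases i with
    | succ i =>
      rw [D, ← mul_assoc, ← A_g _ _ (by omega), mul_assoc, ih i (by omega), mul_assoc]
      have e : n + 1 - 1 - (i + 1) = n - 1 - i := by omega
      rw [e]
    | zero =>
      cases n with
      | zero => simp [D, A]
      | succ n =>
        have e : n + 1 + 1 - 1 - 0 = n + 1 := by omega
        rw [e]
        have h1 : D (n + 1 + 1) * g (n + 1) = A (n + 2) * (A (n + 2) * D n) := by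
          rw [D, D, mul_assoc, mul_assoc, D_far _ _ (by omega), A, ← mul_assoc (A (n + 1)) (g (n + 1))]
        rw [h1, D, D, ← mul_assoc (A (n + 1 + 1)) (A (n + 1)), A_A _ _ (by omega)]
        have h3 : A (n + 2) * (A (n + 2) * D n) =
            g 0 * (shM (A (n + 1)) * (A (n + 2) * D n)) := by
          rw [← mul_assoc (g 0), ← A_succ_shift]
        rw [h3, mul_assoc]

lemma D_dvd (n : ℕ) : ∀ i, i < n → g i ∣ D n := by
  induction n with
  | zero => intro i hi; omega
  | succ n ih =>
    intro i hi
    cases i with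
    | zero => exact ⟨shM (A n) * D n, by rw [D, A_succ_shift, mul_assoc]⟩
    | succ i =>
      obtain ⟨c, hc⟩ := ih i (by omega)
      exact ⟨A (n + 1) * c, by rw [D, hc, ← mul_assoc, A_g _ _ (by omega), mul_assoc]⟩

/-- all letters `≥ k` (value one) -/
def supp (k : ℕ) : M →* ℕ :=
  liftM (fun i => if k ≤ i then 1 else 0) (fun i j _ => mul_comm _ _)
    (fun i => by split_ifs <;> simp)

lemma supp_g (k i : ℕ) : supp k (g i) = 1 ↔ k ≤ i := by simp [supp]

lemma supp_mul (k : ℕ) (x y : M) : supp k (x * y) = 1 ↔ supp k x = 1 ∧ supp k y = 1 := by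
  rw [map_mul, mul_eq_one]

lemma supp_shM (k : ℕ) (x : M) : supp (k + 1) (shM x) = 1 ↔ supp k x = 1 := by
  induction x using M.ind with
  | one => simp
  | cons i x ih => rw [map_mul, supp_mul, supp_mul, ih, shM_g, supp_g, supp_g]; simp

lemma supp_one {x : M} (h : supp 1 x = 1) : ∃ y, x = shM y := by
  induction x using M.ind with
  | one => exact ⟨1, by simp⟩
  | cons i x ih =>
    rw [supp_mul, supp_g] at h
    obtain ⟨y, rfl⟩ := ih h.2
    refine ⟨g (i - 1) * y, ?_⟩
    rw [map_mul, shM_g, Nat.sub_add_cancel h.1]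

/-- words in letters `< n` -/
lemma D_slide (n i : ℕ) (hi : i < n) (l : ℕ) : ∃ j, j < n ∧ g i * D n ^ l = D n ^ l * g j := by
  induction l with
  | zero => exact ⟨i, hi, by simp⟩
  | succ l ih =>
    obtain ⟨j, hj, e⟩ := ih
    refine ⟨n - 1 - j, by omega, ?_⟩
    rw [pow_succ, ← mul_assoc, e, mul_assoc, D_flip n j hj, mul_assoc]

/-- all letters `< n` (value one) -/
def bnd (n : ℕ) : M →* ℕ :=
  liftM (fun i => if i < n then 1 else 0) (fun i j _ => mul_comm _ _)
    (fun i => by split_ifs <;> simp)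

lemma bnd_g (n i : ℕ) : bnd n (g i) = 1 ↔ i < n := by simp [bnd]

lemma bnd_mul (n : ℕ) (x y : M) : bnd n (x * y) = 1 ↔ bnd n x = 1 ∧ bnd n y = 1 := by
  rw [map_mul, mul_eq_one]

lemma bnd_A (n m : ℕ) (h : m ≤ n) : bnd n (A m) = 1 := by
  induction m with
  | zero => simp [A]
  | succ m ih => rw [A, bnd_mul, bnd_g]; exact ⟨ih (by omega), by omega⟩

lemma bnd_D (n m : ℕ) (h : m ≤ n) : bnd n (D m) = 1 := by
  induction m with
  | zero => simp [D]
  | succ m ih => rw [D, bnd_mul]; exact ⟨bnd_A _ _ h, ih (by omega)⟩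

lemma bnd_exists (x : M) : ∃ N, ∀ n, N ≤ n → bnd n x = 1 := by
  induction x using M.ind with
  | one => exact ⟨0, by simp⟩
  | cons i x ih =>
    obtain ⟨N, hN⟩ := ih
    refine ⟨max N (i + 1), fun n hn => ?_⟩
    rw [bnd_mul, bnd_g]
    exact ⟨by omega, hN n (by omega)⟩

lemma D_slide' (n l : ℕ) (p : M) (hp : bnd n p = 1) : ∃ q, p * D n ^ l = D n ^ l * q := by
  induction p using M.ind with
  | one => exact ⟨1, by simp⟩
  | cons i x ih =>
    rw [bnd_mul, bnd_g] at hp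
    obtain ⟨q, hq⟩ := ih hp.2
    obtain ⟨j, _, e⟩ := D_slide n i hp.1 l
    refine ⟨g j * q, ?_⟩
    rw [mul_assoc, hq, ← mul_assoc, e, mul_assoc]

lemma dvd_pow' (n : ℕ) (x : M) (hx : bnd n x = 1) : ∃ N, ∀ l, N ≤ l → x ∣ D n ^ l := by
  induction x using M.ind with
  | one => exact ⟨0, fun l _ => one_dvd _⟩
  | cons i x ih =>
    rw [bnd_mul, bnd_g] at hx
    obtain ⟨N, hN⟩ := ih hx.2
    refine ⟨N + 1, fun l hl => ?_⟩
    obtain ⟨l, rfl⟩ : ∃ k, l = k + 1 := ⟨l - 1, by omega⟩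
    obtain ⟨c, hc⟩ := hN l (by omega)
    obtain ⟨p, hp⟩ := D_dvd n i hx.1
    have hb := bnd_D n n le_rfl
    rw [hp, bnd_mul] at hb
    obtain ⟨q, hq⟩ := D_slide' n l p hb.2
    refine ⟨c * q, ?_⟩
    have : D n ^ (l + 1) = g i * (p * D n ^ l) := by rw [pow_succ', hp, mul_assoc]
    rw [this, hq, hc]
    simp only [mul_assoc]

/-- common right multiples -/
lemma common_right (x y : M) : ∃ p q, x * p = y * q := by
  obtain ⟨N, hN⟩ := bnd_exists x
  obtain ⟨N', hN'⟩ := bnd_exists y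
  obtain ⟨L, hL⟩ := dvd_pow' (max N N') x (hN _ (by omega))
  obtain ⟨L', hL'⟩ := dvd_pow' (max N N') y (hN' _ (by omega))
  obtain ⟨p, hp⟩ := hL (max L L') (by omega)
  obtain ⟨q, hq⟩ := hL' (max L L') (by omega)
  exact ⟨p, q, hp.symm.trans hq⟩

/-- common left multiples -/
lemma common_left (x y : M) : ∃ p q, p * x = q * y := by
  obtain ⟨p, q, h⟩ := common_right (rv x) (rv y)
  refine ⟨rv p, rv q, ?_⟩
  have := congrArg rv h
  simpa [rv_mul, rv_rv] using this

lemma g_dvd_g {i : ℕ} {a b : M} : g i * a ∣ g i * b ↔ a ∣ b := by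
  constructor
  · rintro ⟨c, hc⟩
    rw [mul_assoc] at hc
    exact ⟨c, g_cancel hc⟩
  · rintro ⟨c, rfl⟩
    exact ⟨c, by rw [mul_assoc]⟩

/-- lcm of two generators -/
lemma lcm_gen (i j : ℕ) : ∃ c c' : M, g i * c = g j * c' ∧
    ∀ y, g i ∣ y → g j ∣ y → g i * c ∣ y := by
  by_cases hij : i = j
  · subst hij
    exact ⟨1, 1, rfl, fun y h _ => by simpa using h⟩
  by_cases hf : i + 2 ≤ j ∨ j + 2 ≤ i
  · refine ⟨g j, g i, g_far' hf, ?_⟩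
    rintro y ⟨a, rfl⟩ ⟨b, hb⟩
    obtain ⟨z, rfl, rfl⟩ := (KL_all (len a + 1)).far hf (by omega) hb
    exact ⟨z, by rw [mul_assoc]⟩
  · have ha : i + 1 = j ∨ j + 1 = i := by omega
    refine ⟨g j * g i, g i * g j, by simpa [mul_assoc] using g_adj' ha, ?_⟩
    rintro y ⟨a, rfl⟩ ⟨b, hb⟩
    obtain ⟨z, rfl, rfl⟩ := (KL_all (len a + 1)).adj ha (by omega) hb
    exact ⟨z, by simp only [mul_assoc]⟩

/-- existence of right lcms -/
lemma lcm_aux (n : ℕ) : ∀ x u v : M, len x ≤ n → u ∣ x → v ∣ x →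
    ∃ m, ∀ y, (u ∣ y ∧ v ∣ y) ↔ m ∣ y := by
  induction n with
  | zero =>
    intro x u v hx hu hv
    refine ⟨1, fun y => ?_⟩
    have h1 : ∀ w, w ∣ x → w = 1 := by
      intro w hw
      obtain ⟨c, rfl⟩ := hw
      induction w using M.ind with
      | one => rfl
      | cons i w _ => rw [mul_assoc, len_g_mul] at hx; omega
    rw [h1 u hu, h1 v hv]
    simp
  | succ n ih =>
    intro x u v hx hu hv
    induction u using M.ind with
    | one => exact ⟨v, fun y => by simp⟩
    | cons i u _ =>
      induction v using M.ind with
      | one => exact ⟨g i * u, fun y => by simp⟩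
      | cons j v _ =>
        obtain ⟨c, c', hcc, hlcm⟩ := lcm_gen i j
        have giu : ∀ y, g i * u ∣ y → g i ∣ y := fun y h => dvd_of_mul_right_dvd h
        have gjv : ∀ y, g j * v ∣ y → g j ∣ y := fun y h => dvd_of_mul_right_dvd h
        have hcx : g i * c ∣ x := hlcm x (giu x hu) (gjv x hv)
        obtain ⟨x1, rfl⟩ := giu x hu
        obtain ⟨x2, hx2⟩ := gjv _ hv
        have hl := congrArg len hx2
        rw [len_g_mul] at hx
        rw [len_g_mul, len_g_mul] at hl
        obtain ⟨a, ha⟩ := ih x1 u c (by omega) (g_dvd_g.1 hu) (g_dvd_g.1 hcx)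
        obtain ⟨b, hb⟩ := ih x2 v c' (by omega) (g_dvd_g.1 (hx2 ▸ hv))
          (g_dvd_g.1 (by rw [← hcc, ← hx2]; exact hcx))
        have hc'b : c' ∣ b := ((hb b).2 dvd_rfl).2
        obtain ⟨d, hd⟩ : g i ∣ g j * b := by
          obtain ⟨e, rfl⟩ := hc'b
          exact ⟨c * e, by rw [← mul_assoc, ← hcc, mul_assoc]⟩
        have hax : a ∣ x1 := (ha x1).1 ⟨g_dvd_g.1 hu, g_dvd_g.1 hcx⟩
        have hbx : b ∣ x2 := (hb x2).1 ⟨g_dvd_g.1 (hx2 ▸ hv),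
          g_dvd_g.1 (by rw [← hcc, ← hx2]; exact hcx)⟩
        have hdx : d ∣ x1 := by
          have : g j * b ∣ g j * x2 := g_dvd_g.2 hbx
          rw [hd, ← hx2] at this
          exact g_dvd_g.1 this
        obtain ⟨m, hm⟩ := ih x1 a d (by omega) hax hdx
        refine ⟨g i * m, fun y => ⟨?_, ?_⟩⟩
        · rintro ⟨h1, h2⟩
          have h3 := hlcm y (giu y h1) (gjv y h2)
          obtain ⟨y1, rfl⟩ := giu y h1
          obtain ⟨y2, hy2⟩ := gjv _ h2
          refine g_dvd_g.2 ((hm y1).1 ⟨(ha y1).1 ⟨g_dvd_g.1 h1, g_dvd_g.1 h3⟩, ?_⟩)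
          have : g j * b ∣ g j * y2 := by
            refine g_dvd_g.2 ((hb y2).1 ⟨g_dvd_g.1 (hy2 ▸ h2), (g_dvd_g (i := j)).1 ?_⟩)
            rw [← hcc, ← hy2]; exact h3
          rw [hd, ← hy2] at this
          exact g_dvd_g.1 this
        · intro h
          have hmm := (hm m).2 dvd_rfl
          refine ⟨dvd_trans (g_dvd_g.2 (dvd_trans ((ha a).2 dvd_rfl).1 hmm.1)) h, ?_⟩
          have h1 : g j * v ∣ g j * b := g_dvd_g.2 ((hb b).2 dvd_rfl).1
          rw [hd] at h1
          exact dvd_trans (dvd_trans h1 (g_dvd_g.2 hmm.2)) h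

lemma exists_lcm (u v : M) : ∃ m, ∀ y, (u ∣ y ∧ v ∣ y) ↔ m ∣ y := by
  obtain ⟨p, q, h⟩ := common_right u v
  exact lcm_aux _ (u * p) u v le_rfl ⟨p, rfl⟩ ⟨q, h⟩

lemma supp_two (w : M) : ∀ v : M, supp 1 v = 1 → g 0 * v = v * w → supp 2 v = 1 := by
  intro v
  induction v using M.ind with
  | one => intro _ _; simp
  | cons i v ih =>
    intro hs h
    rw [supp_mul, supp_g] at hs
    rw [mul_assoc] at h
    rcases key h with ⟨h, _⟩ | ⟨hf, z, h1, h2⟩ | ⟨_, z, h1, h2⟩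
    · omega
    · have := g_cancel h1
      subst this
      rw [supp_mul, supp_g]
      exact ⟨by omega, ih hs.2 h2.symm⟩
    · have := g_cancel h1
      subst this
      rw [supp_mul, supp_g] at hs
      omega

/-! ### Embedding in the group -/

lemma σ_far (i j : ℕ) (h : i + 2 ≤ j) : σ i * σ j = σ j * σ i := by
  have := mk_rel_eq_one (Or.inl ⟨i, j, h, rfl⟩)
  rw [map_mul, map_mul, map_mul, map_inv, map_inv, mul_inv_eq_one, mul_inv_eq_iff_eq_mul] at this
  exact this

lemma σ_adj (i : ℕ) : σ i * σ (i + 1) * σ i = σ (i + 1) * σ i * σ (i + 1) := by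
  have := mk_rel_eq_one (Or.inr ⟨i, rfl⟩)
  rw [map_mul, map_inv, mul_inv_eq_one] at this
  rw [map_mul, map_mul, map_mul, map_mul] at this
  exact this

/-- the canonical map -/
def ι : M →* Binf := liftM σ σ_far σ_adj

@[simp] lemma ι_g (i : ℕ) : ι (g i) = σ i := by simp [ι]

lemma ι_sh (x : M) : ι (shM x) = sh (ι x) := by
  induction x using M.ind with
  | one => simp
  | cons i x ih => simp [ih]

/-- The Ore condition. -/
noncomputable instance oreInst : OreLocalization.OreSet (⊤ : Submonoid M) where
  ore_right_cancel r₁ r₂ s h := ⟨1, by rw [mul_right_cancel' _ h]⟩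
  oreNum r s := (common_left r (s : M)).choose_spec.choose
  oreDenom r s := ⟨(common_left r (s : M)).choose, trivial⟩
  ore_eq r s := (common_left r (s : M)).choose_spec.choose_spec

/-- The generator in the units of the localization. -/
noncomputable def unitHom : M →* (OreLocalization (⊤ : Submonoid M) M)ˣ where
  toFun x := OreLocalization.numeratorUnit (⟨x, trivial⟩ : (⊤ : Submonoid M))
  map_one' := by
    ext
    exact map_one (OreLocalization.numeratorHom (S := (⊤ : Submonoid M)))
  map_mul' x y := by
    ext
    exact map_mul (OreLocalization.numeratorHom (S := (⊤ : Submonoid M))) x y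

lemma unitHom_inj {x y : M} (h : unitHom x = unitHom y) : x = y := by
  have h : OreLocalization.oreDiv x (1 : (⊤ : Submonoid M)) = OreLocalization.oreDiv y 1 :=
    congrArg Units.val h
  rw [OreLocalization.oreDiv_eq_iff] at h
  obtain ⟨u, v, h1, h2⟩ := h
  simp only [OneMemClass.coe_one, mul_one] at h2
  have h1 : (u : M) * y = v * x := h1
  rw [← h2] at h1
  exact (mul_left_cancel' _ h1).symm

lemma rels_unit : ∀ r ∈ braidRels, FreeGroup.lift (fun n => unitHom (g n)) r = 1 := by
  intro r hr
  rcases hr with ⟨i, j, hij, rfl⟩ | ⟨i, rfl⟩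
  · simp only [map_mul, map_inv, FreeGroup.lift_apply_of]
    rw [mul_inv_eq_one, mul_inv_eq_iff_eq_mul, ← map_mul, ← map_mul, g_far' (Or.inl hij)]
  · simp only [map_mul, map_inv, FreeGroup.lift_apply_of]
    rw [mul_inv_eq_one]
    simp only [← map_mul]
    rw [g_adj' (Or.inl rfl)]

lemma ι_inj {x y : M} (h : ι x = ι y) : x = y := by
  apply unitHom_inj
  have : ∀ x, PresentedGroup.toGroup rels_unit (ι x) = unitHom x := by
    intro x
    induction x using M.ind with
    | one => simp
    | cons i x ih =>
      rw [map_mul, map_mul, map_mul, ih, ι_g]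
      congr 1
      exact PresentedGroup.toGroup.of rels_unit
  rw [← this, ← this, h]

/-- Every braid is a left fraction. -/
lemma frac (b : Binf) : ∃ u v : M, ι u * b = ι v := by
  have hb : b ∈ Subgroup.closure (Set.range (PresentedGroup.of (rels := braidRels))) := by
    rw [PresentedGroup.closure_range_of]; trivial
  induction hb using Subgroup.closure_induction with
  | mem x hx =>
    obtain ⟨i, rfl⟩ := hx
    exact ⟨1, g i, by rw [ι_g, map_one, one_mul]; rfl⟩
  | one => exact ⟨1, 1, by simp⟩
  | mul x y _ _ hx hy =>
    obtain ⟨u, v, h⟩ := hx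
    obtain ⟨u', v', h'⟩ := hy
    obtain ⟨p, q, e⟩ := common_left v u'
    refine ⟨p * u, q * v', ?_⟩
    rw [map_mul, map_mul, ← h', ← mul_assoc, mul_assoc (ι p), h, ← mul_assoc, ← map_mul, ← map_mul, e]
  | inv x _ hx =>
    obtain ⟨u, v, h⟩ := hx
    exact ⟨v, u, by rw [← h]; simp⟩

/-- If `sh e` commutes with `σ 0` then `e` is a shift. -/
lemma commute_shift (e : Binf) (h : sh e * σ 0 = σ 0 * sh e) : ∃ d, e = sh d := by
  obtain ⟨u, v, huv⟩ := frac e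
  obtain ⟨m, hm⟩ := exists_lcm (shM u) (shM v)
  obtain ⟨⟨v', hv'⟩, ⟨u', hu'⟩⟩ := (hm m).2 dvd_rfl
  -- `v'` and `u'` avoid the letter 0
  obtain ⟨p, q, hpq⟩ := common_right u v
  have hmd : m ∣ shM (u * p) :=
    (hm _).1 ⟨⟨shM p, by rw [map_mul]⟩, ⟨shM q, by rw [hpq, map_mul]⟩⟩
  have hsm : supp 1 m = 1 := by
    have : supp 1 (shM (u * p)) = 1 := by
      rw [supp_shM]
      generalize u * p = x
      induction x using M.ind with
      | one => simp
      | cons i x ih => rw [supp_mul, supp_g]; exact ⟨by omega, ih⟩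
    obtain ⟨c, hc⟩ := hmd
    rw [hc, supp_mul] at this
    exact this.1
  have hsv : supp 1 v' = 1 := by rw [hv', supp_mul] at hsm; exact hsm.2
  have hsu : supp 1 u' = 1 := by rw [hu', supp_mul] at hsm; exact hsm.2
  have he : sh e = (ι (shM u))⁻¹ * ι (shM v) := by
    rw [ι_sh, ι_sh, ← huv, map_mul]; group
  have he' : sh e * ι u' = ι v' := by
    rw [he, mul_assoc, inv_mul_eq_iff_eq_mul, ← map_mul, ← map_mul, ← hu', ← hv']
  have hx : shM u * (g 0 * v') = shM v * (g 0 * u') := by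
    apply ι_inj
    rw [map_mul, map_mul, map_mul, map_mul, ι_g, ← he', ← mul_assoc (σ 0), ← h, he]
    group
  obtain ⟨w, hw⟩ := (hm (shM u * (g 0 * v'))).1 ⟨⟨_, rfl⟩, ⟨_, hx⟩⟩
  have hv2 : supp 2 v' = 1 := by
    apply supp_two w v' hsv
    rw [hv', mul_assoc] at hw
    exact mul_left_cancel' _ hw
  have hu2 : supp 2 u' = 1 := by
    apply supp_two w u' hsu
    rw [hx, hu', mul_assoc] at hw
    exact mul_left_cancel' _ hw
  obtain ⟨a, rfl⟩ := supp_one hsv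
  obtain ⟨b, rfl⟩ := supp_one hsu
  obtain ⟨a, rfl⟩ := supp_one ((supp_shM 1 a).1 hv2)
  obtain ⟨b, rfl⟩ := supp_one ((supp_shM 1 b).1 hu2)
  have hfin : u * shM a = v * shM b := by
    apply shM_inj
    rw [map_mul, map_mul, ← hv', ← hu']
  refine ⟨ι a * (ι b)⁻¹, ?_⟩
  have := congrArg ι hfin
  rw [map_mul, map_mul, ι_sh, ι_sh, ← huv, mul_assoc] at this
  have := mul_left_cancel this
  rw [map_mul, map_inv, this]
  group

lemma sh_sh_comm (b : Binf) : σ 0 * sh (sh b) = sh (sh b) * σ 0 := by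
  have hb : b ∈ Subgroup.closure (Set.range (PresentedGroup.of (rels := braidRels))) := by
    rw [PresentedGroup.closure_range_of]; trivial
  change Commute _ _
  induction hb using Subgroup.closure_induction with
  | mem x hx =>
    obtain ⟨i, rfl⟩ := hx
    change σ 0 * sh (sh (σ i)) = sh (sh (σ i)) * σ 0
    rw [sh_σ, sh_σ]
    exact σ_far _ _ (by omega)
  | one => simp
  | mul x y _ _ hx hy => rw [map_mul, map_mul]; exact hx.mul_right hy
  | inv x _ hx => rw [map_inv, map_inv]; exact hx.inv_right

end BraidAux

open BraidAux in
/-- `γ` lies in the image of the left translation `y ↦ β ▷ y`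
iff `β ▷ γ = (β ▷ β) ▷ γ`. -/
theorem mem_image_left_translation_iff (β γ : Binf) :
    (∃ β' : Binf, sc β β' = γ) ↔ sc β γ = sc (sc β β) γ := by
  have adj : σ 0 * σ 1 * σ 0 = σ 1 * σ 0 * σ 1 := σ_adj 0
  -- write `γ = β * ε * σ 0 * (sh β)⁻¹`
  obtain ⟨ε, rfl⟩ : ∃ ε, γ = β * ε * σ 0 * (sh β)⁻¹ :=
    ⟨β⁻¹ * γ * sh β * (σ 0)⁻¹, by group⟩
  have h1 : (∃ β' : Binf, sc β β' = β * ε * σ 0 * (sh β)⁻¹) ↔ ∃ d, ε = sh d := by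
    unfold sc
    constructor
    · rintro ⟨d, hd⟩
      exact ⟨d, by simpa using hd.symm⟩
    · rintro ⟨d, rfl⟩
      exact ⟨d, rfl⟩
  have hβ := sh_sh_comm β
  have hβ' : (sh (sh β))⁻¹ * σ 0 = σ 0 * (sh (sh β))⁻¹ := by
    rw [inv_mul_eq_iff_eq_mul, ← mul_assoc, ← hβ]; group
  have e1 : sc β (β * ε * σ 0 * (sh β)⁻¹) =
      β * sh β * (sh ε * (σ 1 * σ 0)) * (sh (sh β))⁻¹ * (sh β)⁻¹ := by
    simp only [sc, map_mul, map_inv, sh_σ, mul_assoc]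
    rw [← mul_assoc _ (σ 0) (sh β)⁻¹, hβ']
    simp only [mul_assoc]
  have e2 : sc (sc β β) (β * ε * σ 0 * (sh β)⁻¹) =
      β * sh β * (σ 0 * sh ε * (σ 1 * σ 0 * (σ 1)⁻¹)) * (sh (sh β))⁻¹ * (sh β)⁻¹ := by
    have : (sh (sh β))⁻¹ * (σ 0 * (sh (sh β) * ((σ 1)⁻¹ * ((sh (sh β))⁻¹ * (sh β)⁻¹)))) =
      σ 0 * ((σ 1)⁻¹ * ((sh (sh β))⁻¹ * (sh β)⁻¹)) := by
      rw [← mul_assoc, hβ']; group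
    simp only [sc, map_mul, map_inv, sh_σ, mul_assoc, mul_inv_rev, inv_inv, zero_add,
      inv_mul_cancel_left]
    rw [this]
  have e3 : σ 1 * σ 0 * (σ 1)⁻¹ = (σ 0)⁻¹ * (σ 1 * σ 0) := by
    rw [mul_inv_eq_iff_eq_mul, mul_assoc, eq_inv_mul_iff_mul_eq, ← mul_assoc, adj]
  rw [h1, e1, e2, e3]
  have h2 : (sh ε * (σ 1 * σ 0)) = (σ 0 * sh ε * ((σ 0)⁻¹ * (σ 1 * σ 0))) ↔
      sh ε * σ 0 = σ 0 * sh ε := by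
    rw [← mul_assoc (σ 0 * sh ε), mul_left_inj, eq_mul_inv_iff_mul_eq]
  rw [mul_left_inj, mul_left_inj, mul_right_inj, h2]
  constructor
  · rintro ⟨d, rfl⟩
    exact (sh_sh_comm d).symm
  · exact commute_shift ε
end

section
/- A braid β ∈ B_∞ belongs to the image of the shift endomorphism sh if and only if sh(β) commutes with σ₁, i.e. sh(β) · σ₁ = σ₁ · sh(β). -/
inductive BE : List ℕ → List ℕ → Prop
  | refl (x) : BE x x
  | trans {x y z} : BE x y → BE y z → BE x z
  | cons (a) {x y} : BE x y → BE (a :: x) (a :: y)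
  | comm (i j : ℕ) (w) : (i + 2 ≤ j ∨ j + 2 ≤ i) → BE (i :: j :: w) (j :: i :: w)
  | braid (i j : ℕ) (w) : (j = i + 1 ∨ i = j + 1) → BE (i :: j :: i :: w) (j :: i :: j :: w)

namespace BE

theorem symm {x y} (h : BE x y) : BE y x := by
  induction h with
  | refl x => exact refl x
  | trans _ _ h1 h2 => exact trans h2 h1
  | cons a _ h => exact cons a h
  | comm i j w h => exact comm j i w h.symm
  | braid i j w h => exact braid j i w h.symm

theorem append_right {x y} (h : BE x y) (z) : BE (x ++ z) (y ++ z) := by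
  induction h with
  | refl x => exact refl _
  | trans _ _ h1 h2 => exact trans h1 h2
  | cons a _ h => exact cons a h
  | comm i j w h => exact comm i j _ h
  | braid i j w h => exact braid i j _ h

theorem append_left (z) {x y} (h : BE x y) : BE (z ++ x) (z ++ y) := by
  induction z with
  | nil => exact h
  | cons a z ih => exact cons a ih

theorem append {x y x' y'} (h : BE x y) (h' : BE x' y') : BE (x ++ x') (y ++ y') :=
  (h.append_right _).trans (h'.append_left _)

theorem reverse {x y} (h : BE x y) : BE x.reverse y.reverse := by
  induction h with
  | refl x => exact refl _
  | trans _ _ h1 h2 => exact trans h1 h2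
  | cons a _ h => simpa using h.append_right [a]
  | comm i j w h => simpa using append_left w.reverse (comm j i [] h.symm)
  | braid i j w h => simpa using append_left w.reverse (braid i j [] h)

theorem length {x y} (h : BE x y) : x.length = y.length := by
  induction h <;> simp_all

theorem mem {x y} (h : BE x y) : ∀ a, a ∈ x ↔ a ∈ y := by
  induction h <;> intro a <;> simp_all <;> tauto

theorem shift {x y} (h : BE x y) : BE (x.map (· + 1)) (y.map (· + 1)) := by
  induction h with
  | refl x => exact refl _
  | trans _ _ h1 h2 => exact trans h1 h2
  | cons a _ h => exact cons _ h
  | comm i j w h => exact comm _ _ _ (by dsimp only; omega)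
  | braid i j w h => exact braid _ _ _ (by dsimp only; omega)

theorem unshift {x y} (h : BE x y) : 0 ∉ x → BE (x.map (· - 1)) (y.map (· - 1)) := by
  induction h with
  | refl x => intro _; exact refl _
  | trans h1' _ h1 h2 => intro h0; exact trans (h1 h0) (h2 (by rwa [← h1'.mem]))
  | cons a _ h => intro h0; exact cons _ (h (by simp_all))
  | comm i j w h => intro h0; simp at h0; exact comm _ _ _ (by dsimp only; omega)
  | braid i j w h => intro h0; simp at h0; exact braid _ _ _ (by dsimp only; omega)

end BE

def bSetoid : Setoid (List ℕ) := ⟨BE, BE.refl, BE.symm, BE.trans⟩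

/-- The positive braid monoid. -/
def BM : Type := Quotient bSetoid

namespace BM

def mk (x : List ℕ) : BM := Quotient.mk bSetoid x

theorem mk_eq {x y} : mk x = mk y ↔ BE x y :=
  ⟨fun h => Quotient.exact (s := bSetoid) h, fun h => Quotient.sound (s := bSetoid) h⟩

theorem ex_mk (a : BM) : ∃ x, a = mk x := by
  obtain ⟨x, h⟩ := Quotient.exists_rep (s := bSetoid) a
  exact ⟨x, h.symm⟩

instance : Monoid BM where
  mul := Quotient.map₂ (· ++ ·) (fun _ _ h _ _ h' => BE.append h h')
  one := mk []
  mul_assoc a b c := by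
    obtain ⟨x, rfl⟩ := ex_mk a
    obtain ⟨y, rfl⟩ := ex_mk b
    obtain ⟨z, rfl⟩ := ex_mk c
    exact congrArg mk (List.append_assoc x y z)
  one_mul a := by
    obtain ⟨x, rfl⟩ := ex_mk a
    rfl
  mul_one a := by
    obtain ⟨x, rfl⟩ := ex_mk a
    exact congrArg mk (List.append_nil x)

theorem mk_mul (x y) : mk x * mk y = mk (x ++ y) := rfl
theorem mk_nil : mk [] = 1 := rfl

def s (i : ℕ) : BM := mk [i]

theorem mk_cons (i x) : mk (i :: x) = s i * mk x := rfl

theorem ind {p : BM → Prop} (h1 : p 1) (hs : ∀ i x, p x → p (s i * x)) (a) : p a := by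
  obtain ⟨x, rfl⟩ := ex_mk a
  induction x with
  | nil => exact h1
  | cons i x ih => exact hs i _ ih

def len : BM → ℕ := Quotient.lift List.length (fun _ _ h => BE.length h)
theorem len_mk (x) : len (mk x) = x.length := rfl
@[simp] theorem len_one : len 1 = 0 := rfl
@[simp] theorem len_s (i) : len (s i) = 1 := rfl
@[simp] theorem len_mul (a b) : len (a * b) = len a + len b := by
  obtain ⟨x, rfl⟩ := ex_mk a
  obtain ⟨y, rfl⟩ := ex_mk b
  simp [mk_mul, len_mk]

def supp (i : ℕ) : BM → Prop := Quotient.lift (fun x => i ∈ x) (fun _ _ h => propext (BE.mem h i))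
theorem supp_mk (i x) : supp i (mk x) ↔ i ∈ x := Iff.rfl
@[simp] theorem supp_one (i) : ¬ supp i 1 := by rw [← mk_nil, supp_mk]; simp
@[simp] theorem supp_s (i j) : supp i (s j) ↔ i = j := by rw [s, supp_mk]; simp
@[simp] theorem supp_mul (i a b) : supp i (a * b) ↔ supp i a ∨ supp i b := by
  obtain ⟨x, rfl⟩ := ex_mk a
  obtain ⟨y, rfl⟩ := ex_mk b
  simp [mk_mul, supp_mk]

theorem comm {i j : ℕ} (h : i + 2 ≤ j ∨ j + 2 ≤ i) : s i * s j = s j * s i :=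
  mk_eq.2 (BE.comm i j [] h)
theorem braid {i j : ℕ} (h : j = i + 1 ∨ i = j + 1) : s i * (s j * s i) = s j * (s i * s j) :=
  mk_eq.2 (BE.braid i j [] h)
theorem comm' {i j : ℕ} (h : i + 2 ≤ j ∨ j + 2 ≤ i) (w : BM) :
    s i * (s j * w) = s j * (s i * w) := by
  rw [← mul_assoc, comm h, mul_assoc]
theorem braid' {i j : ℕ} (h : j = i + 1 ∨ i = j + 1) (w : BM) :
    s i * (s j * (s i * w)) = s j * (s i * (s j * w)) := by
  have := congrArg (· * w) (braid h)
  simpa [mul_assoc] using this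

/-- Garside's compatibility relation. -/
def C (i : ℕ) (u : BM) (j : ℕ) (v : BM) : Prop :=
  (i = j ∧ u = v) ∨
  ((i + 2 ≤ j ∨ j + 2 ≤ i) ∧ ∃ w, u = s j * w ∧ v = s i * w) ∨
  ((j = i + 1 ∨ i = j + 1) ∧ ∃ w, u = s j * (s i * w) ∧ v = s i * (s j * w))

theorem C.symm {i u j v} (h : C i u j v) : C j v i u := by
  rcases h with ⟨a, b⟩ | ⟨a, w, b, c⟩ | ⟨a, w, b, c⟩
  · exact .inl ⟨a.symm, b.symm⟩
  · exact .inr (.inl ⟨a.symm, w, c, b⟩)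
  · exact .inr (.inr ⟨a.symm, w, c, b⟩)

theorem C.same {i u v} (h : C i u i v) : u = v := by
  rcases h with ⟨_, b⟩ | ⟨a, _⟩ | ⟨a, _⟩
  · exact b
  · omega
  · omega

theorem C.com {i j u v} (h : C i u j v) (hij : i + 2 ≤ j ∨ j + 2 ≤ i) :
    ∃ w, u = s j * w ∧ v = s i * w := by
  rcases h with ⟨a, _⟩ | ⟨_, a⟩ | ⟨a, _⟩
  · omega
  · exact a
  · omega

theorem C.adj {i j u v} (h : C i u j v) (hij : j = i + 1 ∨ i = j + 1) :
    ∃ w, u = s j * (s i * w) ∧ v = s i * (s j * w) := by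
  rcases h with ⟨a, _⟩ | ⟨a, _⟩ | ⟨_, a⟩
  · omega
  · omega
  · exact a

theorem C.trans45 {n : ℕ} (IH : ∀ m < n, ∀ i u j v, len u = m → s i * u = s j * v → C i u j v)
    {i u k t j v} (ht : len t = n) (h1 : i + 2 ≤ k ∨ k + 2 ≤ i)
    (h2 : j = k + 1 ∨ k = j + 1) (w w' : BM) (hu : u = s k * w) (hw : t = s i * w)
    (hw' : t = s j * (s k * w')) (hv : v = s k * (s j * w')) : C i u j v := by
  subst hu hv
  have e := hw.symm.trans hw'
  have l1 : len w + 1 = n := by rw [← ht, hw]; simp; omega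
  have l2 : len w' + 2 = n := by rw [← ht, hw']; simp; omega
  have c1 := IH _ (by omega) _ _ _ _ rfl e
  by_cases hij : i + 2 ≤ j ∨ j + 2 ≤ i
  · obtain ⟨z, rfl, e2⟩ := c1.com hij
    obtain ⟨y, rfl, rfl⟩ := (IH _ (by omega) _ _ _ _ rfl e2).com (by omega)
    refine .inr (.inl ⟨hij, s k * (s j * y), ?_, ?_⟩)
    · rw [braid' (by omega)]
    · rw [comm' (i := j) (j := i) (by omega), comm' (i := k) (j := i) (by omega)]
  · have hij' : j = i + 1 ∨ i = j + 1 := by omega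
    obtain ⟨z, rfl, e2⟩ := c1.adj hij'
    obtain ⟨y, rfl, e3⟩ := (IH _ (by omega) _ _ _ _ rfl e2).com (by omega)
    simp at l1 l2
    obtain ⟨x, rfl, rfl⟩ := (IH _ (by omega) _ _ _ _ rfl e3).adj (by omega)
    refine .inr (.inr ⟨hij', s k * (s j * (s i * x)), ?_, ?_⟩)
    · rw [comm' (i := i) (j := k) (by omega), braid' (i := k) (j := j) (by omega),
        braid' (i := j) (j := i) (by omega), comm' (i := i) (j := k) (by omega)]
    · rw [braid' (i := j) (j := i) (by omega), comm' (i := k) (j := i) (by omega),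
        comm' (i := i) (j := k) (by omega) x, braid' (i := k) (j := j) (by omega)]

theorem C.trans {n : ℕ} (IH : ∀ m < n, ∀ i u j v, len u = m → s i * u = s j * v → C i u j v)
    {i u k t j v} (ht : len t = n) (a : C i u k t) (b : C k t j v) : C i u j v := by
  rcases a with ⟨rfl, rfl⟩ | ⟨h1, w, hu, hw⟩ | ⟨h1, w, hu, hw⟩
  · exact b
  · rcases b with ⟨rfl, rfl⟩ | ⟨h2, w', hw', hv⟩ | ⟨h2, w', hw', hv⟩
    · exact .inr (.inl ⟨h1, w, hu, hw⟩)
    · have l1 : len w + 1 = n := by rw [← ht, hw]; simp; omega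
      have c1 := IH _ (by omega) _ _ _ _ rfl (hw.symm.trans hw')
      subst hu hv
      by_cases hij : i = j
      · subst hij
        rw [c1.same]
        exact .inl ⟨rfl, rfl⟩
      by_cases hij : i + 2 ≤ j ∨ j + 2 ≤ i
      · obtain ⟨z, rfl, rfl⟩ := c1.com hij
        exact .inr (.inl ⟨hij, s k * z, comm' (by omega) _, comm' (by omega) _⟩)
      · have hij' : j = i + 1 ∨ i = j + 1 := by omega
        obtain ⟨z, rfl, rfl⟩ := c1.adj hij'
        refine .inr (.inr ⟨hij', s k * z, ?_, ?_⟩)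
        · rw [comm' (i := k) (j := j) (by omega), comm' (i := k) (j := i) (by omega)]
        · rw [comm' (i := k) (j := i) (by omega), comm' (i := k) (j := j) (by omega)]
    · exact C.trans45 IH ht h1 h2 w w' hu hw hw' hv
  · rcases b with ⟨rfl, rfl⟩ | ⟨h2, w', hw', hv⟩ | ⟨h2, w', hw', hv⟩
    · exact .inr (.inr ⟨h1, w, hu, hw⟩)
    · exact (C.trans45 IH ht h2.symm (by omega) w' w hv hw' hw hu).symm
    · have l1 : len w + 2 = n := by rw [← ht, hw]; simp; omega
      have l2 : len w' + 2 = n := by rw [← ht, hw']; simp; omega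
      have c1 := IH _ (by simp; omega) _ _ _ _ rfl (hw.symm.trans hw')
      subst hu hv
      by_cases hij : i = j
      · subst hij
        rw [(IH _ (by omega) _ _ _ _ rfl c1.same).same]
        exact .inl ⟨rfl, rfl⟩
      have hij : i + 2 ≤ j ∨ j + 2 ≤ i := by omega
      obtain ⟨z, e1, e2⟩ := c1.com hij
      obtain ⟨y, rfl, rfl⟩ := (IH _ (by omega) _ _ _ _ rfl e1).adj (by omega)
      obtain ⟨x, rfl, e3⟩ := (IH _ (by omega) _ _ _ _ rfl e2).adj (by omega)
      simp at l1 l2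
      have e4 := (IH _ (by simp; omega) _ _ _ _ rfl e3).same
      obtain ⟨p, rfl, rfl⟩ := (IH _ (by omega) _ _ _ _ rfl e4).com (by omega)
      refine .inr (.inl ⟨hij, s k * (s j * (s i * (s k * p))), ?_, ?_⟩)
      · rw [comm' (i := i) (j := j) (by omega), braid' (i := i) (j := k) (by omega),
          braid' (i := k) (j := j) (by omega)]
      · rw [comm' (i := j) (j := i) (by omega), braid' (i := j) (j := k) (by omega),
          braid' (i := k) (j := i) (by omega), comm' (i := i) (j := j) (by omega)]

theorem key : ∀ n, ∀ i u j v, len u = n → s i * u = s j * v → C i u j v := by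
  intro n
  induction n using Nat.strong_induction_on with
  | _ n IH =>
    have aux : ∀ x y, BE x y → x.length = n + 1 → ∀ i u j v, x = i :: u → y = j :: v →
        C i (mk u) j (mk v) := by
      intro x y h
      induction h with
      | refl x =>
        intro _ i u j v h1 h2
        rw [h1] at h2
        obtain ⟨rfl, rfl⟩ := List.cons.inj h2
        exact .inl ⟨rfl, rfl⟩
      | @trans x y z hxy _ h1 h2 =>
        intro hl i u j v e1 e2
        have hl' := hxy.length.symm.trans hl
        cases y with
        | nil => simp at hl'
        | cons k t =>
          exact C.trans IH (by simpa [len_mk] using hl') (h1 hl i u k t e1 rfl)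
            (h2 hl' k t j v rfl e2)
      | cons a h _ =>
        intro _ i u j v e1 e2
        obtain ⟨rfl, rfl⟩ := List.cons.inj e1
        obtain ⟨rfl, rfl⟩ := List.cons.inj e2
        exact .inl ⟨rfl, mk_eq.2 h⟩
      | comm a b w h =>
        intro _ i u j v e1 e2
        obtain ⟨rfl, rfl⟩ := List.cons.inj e1
        obtain ⟨rfl, rfl⟩ := List.cons.inj e2
        exact .inr (.inl ⟨h, mk w, rfl, rfl⟩)
      | braid a b w h =>
        intro _ i u j v e1 e2
        obtain ⟨rfl, rfl⟩ := List.cons.inj e1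
        obtain ⟨rfl, rfl⟩ := List.cons.inj e2
        exact .inr (.inr ⟨h, mk w, rfl, rfl⟩)
    intro i u j v hl h
    obtain ⟨x, rfl⟩ := ex_mk u
    obtain ⟨y, rfl⟩ := ex_mk v
    exact aux _ _ (mk_eq.1 h) (by simpa [len_mk] using hl) _ _ _ _ rfl rfl

theorem key' {i u j v} (h : s i * u = s j * v) : C i u j v := key _ _ _ _ _ rfl h

theorem left_cancel (a : BM) : ∀ {b c : BM}, a * b = a * c → b = c := by
  induction a using ind with
  | h1 => intro b c h; simpa using h
  | hs i x ih =>
    intro b c h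
    rw [mul_assoc, mul_assoc] at h
    exact ih (key' h).same

theorem right_cancel (a : BM) {b c : BM} (h : b * a = c * a) : b = c := by
  obtain ⟨x, rfl⟩ := ex_mk a
  obtain ⟨y, rfl⟩ := ex_mk b
  obtain ⟨z, rfl⟩ := ex_mk c
  have h1 := (mk_eq.1 h).reverse
  rw [List.reverse_append, List.reverse_append] at h1
  have h2 : mk x.reverse * mk y.reverse = mk x.reverse * mk z.reverse := mk_eq.2 h1
  have h3 := (mk_eq.1 (left_cancel _ h2)).reverse
  rw [List.reverse_reverse, List.reverse_reverse] at h3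
  exact mk_eq.2 h3

/-- Lcm-type property. -/
def Q (a b : BM) : Prop := ∃ c d, a * c = b * d ∧ ∀ w y, a * w = b * y → ∃ e, w = c * e ∧ y = d * e

theorem Q.symm {a b} (h : Q a b) : Q b a := by
  obtain ⟨c, d, e, h⟩ := h
  exact ⟨d, c, e.symm, fun w y h' => (h y w h'.symm).imp fun _ h => h.symm⟩

theorem Q_gen (i j : ℕ) : Q (s i) (s j) := by
  by_cases h0 : i = j
  · subst h0
    exact ⟨1, 1, rfl, fun w y h => ⟨w, by simp, by simpa using (key' h).same.symm⟩⟩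
  by_cases h1 : i + 2 ≤ j ∨ j + 2 ≤ i
  · exact ⟨s j, s i, comm h1, fun w y h => (key' h).com h1⟩
  · have h2 : j = i + 1 ∨ i = j + 1 := by omega
    refine ⟨s j * s i, s i * s j, braid h2, fun w y h => ?_⟩
    simpa [mul_assoc] using (key' h).adj h2

theorem Q_main (n : ℕ) : ∀ a b w y : BM, a * w = b * y → len (a * w) = n → Q a b := by
  induction n with
  | zero =>
    intro a b w y h hl
    induction a using ind with
    | h1 => exact ⟨b, 1, by simp, fun w y h => ⟨y, by simpa using h, by simp⟩⟩
    | hs i a' => simp at hl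
  | succ n ih =>
    intro a b w y h hl
    induction a using ind with
    | h1 => exact ⟨b, 1, by simp, fun w y h => ⟨y, by simpa using h, by simp⟩⟩
    | hs i a' =>
    induction b using ind with
    | h1 => exact ⟨1, s i * a', by simp, fun w y h => ⟨w, by simp, by simpa using h.symm⟩⟩
    | hs j b' =>
    simp only [mul_assoc, len_mul, len_s] at h hl
    obtain ⟨c, d, hcd, hQ⟩ := Q_gen i j
    obtain ⟨e, he1, he2⟩ := hQ _ _ h
    obtain ⟨c1, d1, hcd1, hQ1⟩ := ih a' c w e he1 (by simp; omega)
    obtain ⟨f, hf1, hf2⟩ := hQ1 _ _ he1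
    have hl2 : len (b' * y) = n := by
      have := congrArg len h
      simp at this ⊢
      omega
    obtain ⟨c2, d2, hcd2, hQ2⟩ := ih b' (d * d1) y f (by rw [he2, hf2, mul_assoc]) hl2
    refine ⟨c1 * d2, c2, ?_, ?_⟩
    · rw [mul_assoc, ← mul_assoc a', hcd1, mul_assoc (s j), hcd2, mul_assoc c, ← mul_assoc (s i), hcd]
      simp only [mul_assoc]
    · intro w y h
      simp only [mul_assoc] at h
      obtain ⟨e, he1, he2⟩ := hQ _ _ h
      obtain ⟨f, hf1, hf2⟩ := hQ1 _ _ he1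
      obtain ⟨g, hg1, hg2⟩ := hQ2 y f (by rw [he2, hf2, mul_assoc])
      exact ⟨g, by rw [hf1, hg2, mul_assoc], hg1⟩

end BM

namespace BM

def c : ℕ → BM
  | 0 => 1
  | n + 1 => c n * s n

def d : ℕ → BM
  | 0 => 1
  | n + 1 => d n * s (n + 1)

theorem c_far (n i : ℕ) (h : n + 1 ≤ i) : s i * c n = c n * s i := by
  induction n with
  | zero => simp [c]
  | succ n ih =>
    rw [c, ← mul_assoc, ih (by omega), mul_assoc, comm (by omega), mul_assoc]

theorem c_slide (n i : ℕ) (h : i + 1 < n) : s (i + 1) * c n = c n * s i := by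
  induction n with
  | zero => omega
  | succ n ih =>
    by_cases h' : i + 1 < n
    · rw [c, ← mul_assoc, ih h', mul_assoc, comm (by omega), mul_assoc]
    · obtain rfl : n = i + 1 := by omega
      rw [c, c, ← mul_assoc, ← mul_assoc, c_far _ _ le_rfl]
      simp only [mul_assoc]
      rw [braid (i := i + 1) (j := i) (by omega)]

theorem c_eq (n : ℕ) : c (n + 1) = s 0 * d n := by
  induction n with
  | zero => simp [c, d]
  | succ n ih => rw [c, ih, d, mul_assoc]

theorem d_c (n k : ℕ) (h : k ≤ n) : d k * c (n + 1) = c (n + 1) * c k := by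
  induction k with
  | zero => simp [c, d]
  | succ k ih =>
    rw [d, mul_assoc, c_slide _ _ (by omega), ← mul_assoc, ih (by omega), mul_assoc]
    rfl

theorem c_double (n : ℕ) : c (n + 1) ^ 2 * s n = s 0 * c (n + 1) ^ 2 := by
  have h : c (n + 1) ^ 2 = s 0 * (c (n + 1) * c n) := by
    rw [← d_c n n le_rfl, ← mul_assoc, ← c_eq, sq]
  calc c (n + 1) ^ 2 * s n = s 0 * (c (n + 1) * (c n * s n)) := by rw [h]; simp only [mul_assoc]
    _ = _ := by rw [sq]; rfl

theorem c_pow (n i k : ℕ) (h : i + k ≤ n) : s (i + k) * c (n + 1) ^ k = c (n + 1) ^ k * s i := by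
  induction k with
  | zero => simp
  | succ k ih =>
    rw [pow_succ', ← mul_assoc, ← add_assoc, c_slide _ _ (by omega), mul_assoc, ih (by omega),
      mul_assoc]

/-- The full twist. -/
def Z (n : ℕ) : BM := c (n + 1) ^ (n + 2)

theorem Z_eq (n i : ℕ) (h : i ≤ n) :
    Z n = c (n + 1) ^ i * (c (n + 1) ^ 2 * c (n + 1) ^ (n - i)) := by
  rw [Z, ← pow_add, ← pow_add]
  congr 1
  omega

theorem Z_comm (n i : ℕ) (h : i ≤ n) : Z n * s i = s i * Z n := by
  have h1 := c_pow n i (n - i) (by omega)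
  have h2 := c_pow n 0 i (by omega)
  rw [show i + (n - i) = n by omega] at h1
  rw [zero_add] at h2
  rw [Z_eq n i h, mul_assoc, mul_assoc, ← h1, ← mul_assoc (_ ^ 2), c_double, mul_assoc (s 0),
    ← mul_assoc _ (s 0), ← h2, mul_assoc]

theorem Z_dvd (n i : ℕ) (h : i ≤ n) : ∃ e, Z n = s i * e := by
  have h2 := c_pow n 0 i (by omega)
  rw [zero_add] at h2
  refine ⟨c (n + 1) ^ i * (d n * (c (n + 1) * c (n + 1) ^ (n - i))), ?_⟩
  rw [← mul_assoc, h2, Z_eq n i h, sq, mul_assoc, mul_assoc]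
  nth_rw 2 [c_eq]
  rw [mul_assoc]

theorem Z_comm' (n : ℕ) (a : BM) : (∀ i, supp i a → i ≤ n) → Z n * a = a * Z n := by
  induction a using ind with
  | h1 => simp
  | hs i a ih =>
    intro h
    rw [← mul_assoc, Z_comm n i (h i (by simp)), mul_assoc, ih (fun j hj => h j (by simp [hj])),
      mul_assoc]

theorem Z_pow_dvd (n : ℕ) (a : BM) : (∀ i, supp i a → i ≤ n) → ∃ k v, a * v = Z n ^ k := by
  induction a using ind with
  | h1 => exact fun _ => ⟨0, 1, by simp⟩
  | hs i a ih =>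
    intro h
    obtain ⟨k, v, hv⟩ := ih (fun j hj => h j (by simp [hj]))
    obtain ⟨e, he⟩ := Z_dvd n i (h i (by simp))
    have hc : Commute (Z n) (s i) := Z_comm n i (h i (by simp))
    refine ⟨k + 1, v * e, ?_⟩
    rw [mul_assoc, ← mul_assoc a, hv, ← mul_assoc, ← (hc.pow_left k).eq, mul_assoc, ← he, pow_succ]

theorem bound (a : BM) : ∃ n, ∀ i, supp i a → i ≤ n := by
  induction a using ind with
  | h1 => exact ⟨0, fun i h => absurd h (supp_one i)⟩
  | hs j a ih =>
    obtain ⟨n, hn⟩ := ih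
    refine ⟨max j n, fun i h => ?_⟩
    rcases (supp_mul _ _ _).1 h with h | h
    · rw [supp_s] at h; omega
    · have := hn i h; omega

theorem common (a b : BM) : (∃ x y, a * x = b * y) ∧ ∃ x y, x * a = y * b := by
  obtain ⟨n, hn⟩ := bound (a * b)
  have ha : ∀ i, supp i a → i ≤ n := fun i h => hn i (by simp [h])
  have hb : ∀ i, supp i b → i ≤ n := fun i h => hn i (by simp [h])
  obtain ⟨k, v, hv⟩ := Z_pow_dvd n a ha
  obtain ⟨l, w, hw⟩ := Z_pow_dvd n b hb
  have ca : Commute (Z n) a := Z_comm' n a ha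
  have cb : Commute (Z n) b := Z_comm' n b hb
  have hv' : v * a = Z n ^ k := by
    apply left_cancel a
    rw [← mul_assoc, hv, (ca.pow_left k).eq]
  have hw' : w * b = Z n ^ l := by
    apply left_cancel b
    rw [← mul_assoc, hw, (cb.pow_left l).eq]
  constructor
  · refine ⟨v * Z n ^ l, w * Z n ^ k, ?_⟩
    rw [← mul_assoc, ← mul_assoc, hv, hw, ← pow_add, ← pow_add, add_comm]
  · refine ⟨Z n ^ l * v, Z n ^ k * w, ?_⟩
    rw [mul_assoc, mul_assoc, hv', hw', ← pow_add, ← pow_add, add_comm]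

theorem Q_all (a b : BM) : Q a b := by
  obtain ⟨⟨x, y, h⟩, _⟩ := common a b
  exact Q_main _ a b x y h rfl

noncomputable instance : OreLocalization.OreSet (⊤ : Submonoid BM) where
  ore_right_cancel r₁ r₂ t h := ⟨1, by rw [right_cancel _ h]⟩
  oreNum r t := (common r t).2.choose_spec.choose
  oreDenom r t := ⟨(common r t).2.choose, trivial⟩
  ore_eq r t := (common r t).2.choose_spec.choose_spec

abbrev Loc : Type := OreLocalization (⊤ : Submonoid BM) BM

theorem num_inj {a b : BM}
    (h : (OreLocalization.numeratorHom a : Loc) = OreLocalization.numeratorHom b) : a = b := by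
  rw [OreLocalization.numeratorHom_apply, OreLocalization.numeratorHom_apply,
    OreLocalization.oreDiv_eq_iff] at h
  obtain ⟨u, v, h1, h2⟩ := h
  simp only [Submonoid.smul_def, smul_eq_mul, Submonoid.coe_one, mul_one] at h1 h2
  rw [h2] at h1
  exact (left_cancel _ h1).symm

theorem σ_comm {i j : ℕ} (h : i + 2 ≤ j) : σ i * σ j = σ j * σ i := by
  have h := mk_rel_eq_one (Or.inl ⟨i, j, h, rfl⟩)
  simp only [map_mul, map_inv] at h
  rw [mul_inv_eq_one, mul_inv_eq_iff_eq_mul] at h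
  exact h

theorem σ_braid (i : ℕ) : σ i * σ (i + 1) * σ i = σ (i + 1) * σ i * σ (i + 1) := by
  have h := mk_rel_eq_one (Or.inr ⟨i, rfl⟩)
  simp only [map_mul, map_inv] at h
  rw [mul_inv_eq_one] at h
  exact h

theorem prod_eq {x y : List ℕ} (h : BE x y) : (x.map σ).prod = (y.map σ).prod := by
  induction h with
  | refl x => rfl
  | trans _ _ h1 h2 => exact h1.trans h2
  | cons a _ h => simp [h]
  | comm i j w h =>
    simp only [List.map_cons, List.prod_cons, ← mul_assoc]
    rcases h with h | h
    · rw [σ_comm h]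
    · rw [σ_comm h]
  | braid i j w h =>
    simp only [List.map_cons, List.prod_cons, ← mul_assoc]
    rcases h with rfl | rfl
    · rw [σ_braid]
    · rw [σ_braid]

def ι : BM →* Binf where
  toFun := Quotient.lift (fun x : List ℕ => (x.map σ).prod) (fun _ _ h => prod_eq h)
  map_one' := rfl
  map_mul' a b := by
    obtain ⟨x, rfl⟩ := ex_mk a
    obtain ⟨y, rfl⟩ := ex_mk b
    show ((x ++ y).map σ).prod = (x.map σ).prod * (y.map σ).prod
    simp

@[simp] theorem ι_s (i : ℕ) : ι (s i) = σ i := by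
  show ([i].map σ).prod = σ i
  simp

noncomputable def gU (i : ℕ) : Locˣ := OreLocalization.numeratorUnit ⟨s i, trivial⟩

theorem gU_val (i : ℕ) : (gU i : Loc) = OreLocalization.numeratorHom (s i) := rfl

theorem gU_rel : ∀ r ∈ braidRels, FreeGroup.lift gU r = 1 := by
  rintro r (⟨i, j, h, rfl⟩ | ⟨i, rfl⟩)
  · simp only [map_mul, map_inv, FreeGroup.lift_apply_of]
    rw [mul_inv_eq_one, mul_inv_eq_iff_eq_mul]
    ext
    simp only [Units.val_mul, gU_val, ← map_mul]
    rw [comm (.inl h)]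
  · simp only [map_mul, map_inv, FreeGroup.lift_apply_of]
    rw [mul_inv_eq_one]
    ext
    simp only [Units.val_mul, gU_val, ← map_mul]
    rw [mul_assoc, braid (.inl rfl), mul_assoc]

noncomputable def φ : Binf →* Locˣ := PresentedGroup.toGroup gU_rel

theorem φ_σ (i : ℕ) : φ (σ i) = gU i := PresentedGroup.toGroup.of gU_rel

theorem φ_ι (a : BM) : (φ (ι a) : Loc) = OreLocalization.numeratorHom a := by
  induction a using ind with
  | h1 => rw [map_one, map_one, map_one]; rfl
  | hs i a ih => rw [map_mul, map_mul, ι_s, φ_σ, Units.val_mul, ih, gU_val, map_mul]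

theorem ι_inj {a b : BM} (h : ι a = ι b) : a = b := by
  apply num_inj
  rw [← φ_ι, ← φ_ι, h]

theorem frac (β : Binf) : ∃ x y, β = ι x * (ι y)⁻¹ := by
  induction β using PresentedGroup.induction_on with
  | _ w =>
  induction w using FreeGroup.induction_on with
  | C1 => exact ⟨1, 1, by simp⟩
  | of i => exact ⟨s i, 1, by simp [σ, PresentedGroup.of]⟩
  | inv_of i _ => exact ⟨1, s i, by simp [σ, PresentedGroup.of]⟩
  | mul a b ha hb =>
    obtain ⟨x, y, h1⟩ := ha
    obtain ⟨x', y', h2⟩ := hb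
    obtain ⟨⟨p, q, h⟩, _⟩ := common y x'
    refine ⟨x * p, y' * q, ?_⟩
    have h3 : ι y * ι p = ι x' * ι q := by rw [← map_mul, h, map_mul]
    have h4 : ι x' = ι y * ι p * (ι q)⁻¹ := by rw [h3]; group
    rw [map_mul, h1, h2, h4, map_mul, map_mul]
    group

def shM : BM →* BM where
  toFun := Quotient.map (List.map (· + 1)) (fun _ _ h => BE.shift h)
  map_one' := rfl
  map_mul' a b := by
    obtain ⟨x, rfl⟩ := ex_mk a
    obtain ⟨y, rfl⟩ := ex_mk b
    exact congrArg mk List.map_append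

theorem shM_mk (x) : shM (mk x) = mk (x.map (· + 1)) := rfl

@[simp] theorem shM_s (i : ℕ) : shM (s i) = s (i + 1) := rfl

theorem shM_inj {a b : BM} (h : shM a = shM b) : a = b := by
  obtain ⟨x, rfl⟩ := ex_mk a
  obtain ⟨y, rfl⟩ := ex_mk b
  rw [shM_mk, shM_mk, mk_eq] at h
  have := h.unshift (by simp)
  simpa [mk_eq, Function.comp_def] using this

theorem supp_shM (a : BM) : ¬ supp 0 (shM a) := by
  obtain ⟨x, rfl⟩ := ex_mk a
  rw [shM_mk, supp_mk]
  simp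

theorem ex_shM {a : BM} (h : ¬ supp 0 a) : ∃ b, a = shM b := by
  induction a using ind with
  | h1 => exact ⟨1, by simp⟩
  | hs i a ih =>
    simp only [supp_mul, supp_s, not_or] at h
    obtain ⟨b, rfl⟩ := ih h.2
    exact ⟨s (i - 1) * b, by rw [map_mul, shM_s, show i - 1 + 1 = i by omega]⟩

theorem ι_shM (a : BM) : ι (shM a) = sh (ι a) := by
  induction a using ind with
  | h1 => simp
  | hs i a ih => simp [ih]

theorem final {a : BM} (h : s 0 * shM a = shM a * s 0) : ¬ supp 0 a := by
  induction a using ind with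
  | h1 => simp
  | hs i a ih =>
    rw [map_mul, shM_s, mul_assoc] at h
    rcases Nat.eq_zero_or_pos i with rfl | hi
    · obtain ⟨w, h1, _⟩ := (key' h).adj (by omega)
      have h2 := left_cancel _ h1
      exact absurd (show supp 0 (shM a) by rw [h2]; simp) (supp_shM a)
    · rw [comm' (by omega)] at h
      have := ih (left_cancel _ h)
      simp only [supp_mul, supp_s, not_or]
      exact ⟨by omega, this⟩

theorem len_eq_one {z : BM} (h : len z = 1) : ∃ i, z = s i := by
  obtain ⟨x, rfl⟩ := ex_mk z
  rw [len_mk, List.length_eq_one_iff] at h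
  obtain ⟨i, rfl⟩ := h
  exact ⟨i, rfl⟩

theorem final' {a z : BM} (h : s 0 * shM a = shM a * z) : ¬ supp 0 a := by
  have hl := congrArg len h
  simp only [len_mul, len_s] at hl
  obtain ⟨i, rfl⟩ := len_eq_one (z := z) (by omega)
  have : supp 0 (shM a * s i) := by rw [← h]; simp
  rw [supp_mul, supp_s] at this
  obtain rfl := this.resolve_left (supp_shM a)
  exact final h

theorem ι_comm (a : BM) : sh (sh (ι a)) * σ 0 = σ 0 * sh (sh (ι a)) := by
  rw [← ι_shM, ← ι_shM, ← ι_s, ← map_mul, ← map_mul]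
  congr 1
  induction a using ind with
  | h1 => simp
  | hs i a ih =>
    simp only [map_mul, shM_s, mul_assoc]
    rw [ih, comm' (by omega)]

end BM

/-- `β` lies in the image of the shift endomorphism iff `sh β`
commutes with `σ₁`. -/
theorem mem_image_sh_iff (β : Binf) :
    (∃ γ : Binf, sh γ = β) ↔ sh β * σ 0 = σ 0 * sh β := by
  open BM in
  constructor
  · rintro ⟨γ, rfl⟩
    obtain ⟨x, y, rfl⟩ := frac γ
    have h1 : Commute (sh (sh (ι x))) (σ 0) := ι_comm x
    have h2 : Commute (sh (sh (ι y))) (σ 0) := ι_comm y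
    simp only [map_mul, map_inv]
    exact (h1.mul_left h2.inv_left).eq
  · intro h
    obtain ⟨x, y, rfl⟩ := frac β
    obtain ⟨_, a, b, hab⟩ := common (shM x) (shM y)
    obtain ⟨p, q, hpq, hQ⟩ := Q_all a b
    obtain ⟨e, he1, he2⟩ := hQ _ _ hab
    have hp : ¬ supp 0 p := fun hs => supp_shM x (by rw [he1]; simp [hs])
    have hq : ¬ supp 0 q := fun hs => supp_shM y (by rw [he2]; simp [hs])
    have he : ¬ supp 0 e := fun hs => supp_shM x (by rw [he1]; simp [hs])
    obtain ⟨p, rfl⟩ := ex_shM hp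
    obtain ⟨q, rfl⟩ := ex_shM hq
    obtain ⟨e, rfl⟩ := ex_shM he
    rw [← map_mul] at he1 he2
    obtain rfl := shM_inj he1
    obtain rfl := shM_inj he2
    have hβ : ι (p * e) * (ι (q * e))⁻¹ = ι p * (ι q)⁻¹ := by
      rw [map_mul, map_mul]; group
    rw [hβ] at h ⊢
    rw [map_mul, map_inv, ← ι_shM, ← ι_shM] at h
    have hpq' : ι a * ι (shM p) = ι b * ι (shM q) := by rw [← map_mul, hpq, map_mul]
    have hb : ι b = ι a * ι (shM p) * (ι (shM q))⁻¹ := by rw [hpq']; group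
    have hkey : a * (s 0 * shM p) = b * (s 0 * shM q) := by
      apply ι_inj
      simp only [map_mul, ι_s]
      calc ι a * (σ 0 * ι (shM p))
          = ι a * (σ 0 * (ι (shM p) * (ι (shM q))⁻¹)) * ι (shM q) := by group
        _ = ι a * (ι (shM p) * (ι (shM q))⁻¹ * σ 0) * ι (shM q) := by rw [h]
        _ = ι b * (σ 0 * ι (shM q)) := by rw [hb]; group
    obtain ⟨z, hz1, hz2⟩ := hQ _ _ hkey
    obtain ⟨p', rfl⟩ := ex_shM (final' hz1)
    obtain ⟨q', rfl⟩ := ex_shM (final' hz2)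
    exact ⟨ι p' * (ι q')⁻¹, by rw [map_mul, map_inv, ι_shM, ι_shM]⟩
end

section
/- Freeness criterion: let (S, ▷) be a left-shelf generated by a single element g (i.e., S is the smallest subset of itself containing g and closed under ▷), and suppose the division relation has no cycle in S (⊏* is irreflexive). Then: (1) the relation ⊏* is a strict linear order on S; (2) for all a, b, c ∈ S one has a ⊏* a ▷ b, and b ⊏* c holds if and only if a ▷ b ⊏* a ▷ c; (3) S is free based on g: for every left-shelf (S', ▷') and every g' ∈ S', there exists a map φ : S → S' with φ(g) = g' and φ(a ▷ b) = φ(a) ▷' φ(b) for all a, b ∈ S. -/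
/-- The division relation of a left-shelf: `a ⊏ b` iff `a ▷ x = b` for some `x`. -/
def shelfDiv {S : Type*} [Shelf S] (a b : S) : Prop := ∃ x, Shelf.act a x = b

namespace FreeShelfAux

/-- Terms in one variable. -/
inductive Tm : Type
  | x : Tm
  | m : Tm → Tm → Tm

open Tm Relation

/-- One step of left-selfdistributive expansion. -/
inductive Step : Tm → Tm → Prop
  | root (a b c : Tm) : Step (m a (m b c)) (m (m a b) (m a c))
  | left {a a' : Tm} (b : Tm) : Step a a' → Step (m a b) (m a' b)
  | right (a : Tm) {b b' : Tm} : Step b b' → Step (m a b) (m a b')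

/-- Expansion. -/
abbrev E : Tm → Tm → Prop := ReflTransGen Step

theorem E.mul {a a' b b' : Tm} (h : E a a') (k : E b b') : E (m a b) (m a' b') :=
  (ReflTransGen.lift (fun t => m t b) (fun _ _ q => Step.left b q) _ _ h).trans
    (ReflTransGen.lift (fun t => m a' t) (fun _ _ q => Step.right a' q) _ _ k)

/-- Distribute `s` through a term. -/
def star (s : Tm) : Tm → Tm
  | x => m s x
  | m a b => m (star s a) (star s b)

theorem E_star (s t : Tm) : E (m s t) (star s t) := by
  induction t with
  | x => exact .refl
  | m a b iha ihb => exact (ReflTransGen.single (Step.root s a b)).trans (iha.mul ihb)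

theorem star_step (s : Tm) {t t' : Tm} (h : Step t t') : E (star s t) (star s t') := by
  induction h with
  | root a b c => exact .single (Step.root _ _ _)
  | left b _ ih => exact ih.mul .refl
  | right a _ ih => exact E.mul .refl ih

theorem star_right (s : Tm) {t t' : Tm} (h : E t t') : E (star s t) (star s t') := by
  induction h with
  | refl => exact .refl
  | tail _ h ih => exact ih.trans (star_step s h)

theorem star_left {s s' : Tm} (h : E s s') (t : Tm) : E (star s t) (star s' t) := by
  induction t with
  | x => exact h.mul .refl
  | m a b iha ihb => exact iha.mul ihb

theorem star_mono {s s' t t' : Tm} (h : E s s') (k : E t t') : E (star s t) (star s' t') :=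
  (star_left h t).trans (star_right s' k)

theorem star_star (s t r : Tm) : E (star s (star t r)) (star (star s t) (star s r)) := by
  induction r with
  | x => exact E_star (star s t) (m s x)
  | m a b iha ihb => exact iha.mul ihb

/-- Dehornoy's derivation on terms. -/
def d : Tm → Tm
  | x => x
  | m a b => star (d a) (d b)

theorem E_d (t : Tm) : E t (d t) := by
  induction t with
  | x => exact .refl
  | m a b iha ihb => exact (iha.mul ihb).trans (E_star _ _)

theorem step_d {t t' : Tm} (h : Step t t') : E t' (d t) := by
  induction h with
  | root a b c =>
    have h1 : E (m (m a b) (m a c)) (m (star (d a) (d b)) (star (d a) (d c))) :=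
      (E_d (m a b)).mul (E_d (m a c))
    exact h1.trans (star_right (d a) (E_star (d b) (d c)))
  | left b _ ih => exact (ih.mul (E_d b)).trans (E_star _ _)
  | right a _ ih => exact ((E_d a).mul ih).trans (E_star _ _)

theorem d_step {t t' : Tm} (h : Step t t') : E (d t) (d t') := by
  induction h with
  | root a b c => exact star_star _ _ _
  | left b _ ih => exact star_left ih _
  | right a _ ih => exact star_right _ ih

theorem d_mono {t t' : Tm} (h : E t t') : E (d t) (d t') := by
  induction h with
  | refl => exact .refl
  | tail _ h ih => exact ih.trans (d_step h)

theorem E_iter {t t' : Tm} (h : E t t') : ∃ n : ℕ, E t' (d^[n] t) := by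
  induction h with
  | refl => exact ⟨0, .refl⟩
  | tail _ h ih =>
    obtain ⟨n, hn⟩ := ih
    refine ⟨n + 1, ?_⟩
    rw [Function.iterate_succ_apply']
    exact (step_d h).trans (d_mono hn)

theorem iter_add (t : Tm) (n k : ℕ) : E (d^[n] t) (d^[n + k] t) := by
  induction k with
  | zero => exact .refl
  | succ k ih =>
    rw [← add_assoc, Function.iterate_succ_apply']
    exact ih.trans (E_d _)

theorem confluent {t a b : Tm} (h : E t a) (k : E t b) : ∃ c, E a c ∧ E b c := by
  obtain ⟨n, hn⟩ := E_iter h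
  obtain ⟨l, hl⟩ := E_iter k
  exact ⟨d^[n + l] t, hn.trans (iter_add _ _ _),
    hl.trans (by rw [add_comm n l]; exact iter_add _ _ _)⟩

/-- Left-selfdistributive equivalence of terms: a common expansion. -/
def Q (a b : Tm) : Prop := ∃ c, E a c ∧ E b c

theorem Q.rfl (a : Tm) : Q a a := ⟨a, .refl, .refl⟩

theorem Q.symm {a b : Tm} : Q a b → Q b a := fun ⟨c, h, k⟩ => ⟨c, k, h⟩

theorem Q.trans {a b c : Tm} : Q a b → Q b c → Q a c := by
  rintro ⟨u, h1, h2⟩ ⟨v, h3, h4⟩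
  obtain ⟨w, h5, h6⟩ := confluent h2 h3
  exact ⟨w, h1.trans h5, h4.trans h6⟩

theorem Q.mul {a a' b b' : Tm} : Q a a' → Q b b' → Q (m a b) (m a' b') := by
  rintro ⟨u, h1, h2⟩ ⟨v, h3, h4⟩
  exact ⟨m u v, h1.mul h3, h2.mul h4⟩

/-- Right powers. -/
def R : ℕ → Tm
  | 0 => x
  | n + 1 => m x (R n)

theorem absorb (t : Tm) : ∃ N, ∀ n, N ≤ n → Q (R (n + 1)) (m t (R n)) := by
  induction t with
  | x => exact ⟨0, fun n _ => Q.rfl _⟩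
  | m a b iha ihb =>
    obtain ⟨A, hA⟩ := iha
    obtain ⟨B, hB⟩ := ihb
    refine ⟨A + B + 1, fun n hn => ?_⟩
    obtain ⟨k, rfl⟩ : ∃ k, n = k + 1 := ⟨n - 1, by omega⟩
    have h1 := hA (k + 1) (by omega)
    have h2 := hA k (by omega)
    have h3 := hB k (by omega)
    have h4 : Q (m a (m b (R k))) (m (m a b) (m a (R k))) :=
      ⟨_, .single (Step.root _ _ _), .refl⟩
    exact ((h1.trans ((Q.rfl a).mul h3)).trans h4).trans ((Q.rfl (m a b)).mul h2.symm)

/-- Iterated left subterm. -/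
inductive L (s : Tm) : Tm → Prop
  | refl : L s s
  | mul {t : Tm} (r : Tm) : L s t → L s (m t r)

theorem L_step {s t t' : Tm} (h : Step t t') (k : L s t) : ∃ s', L s' t' ∧ E s s' := by
  induction h with
  | root a b c =>
    cases k with
    | refl => exact ⟨_, .refl, .single (Step.root _ _ _)⟩
    | mul _ k => exact ⟨s, (k.mul b).mul _, .refl⟩
  | left b h ih =>
    cases k with
    | refl => exact ⟨_, .refl, .single (Step.left _ h)⟩
    | mul _ k =>
      obtain ⟨s', h1, h2⟩ := ih k
      exact ⟨s', h1.mul _, h2⟩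
  | right a h ih =>
    cases k with
    | refl => exact ⟨_, .refl, .single (Step.right _ h)⟩
    | mul _ k => exact ⟨s, k.mul _, .refl⟩

theorem L_E {s t t' : Tm} (h : E t t') (k : L s t) : ∃ s', L s' t' ∧ E s s' := by
  induction h with
  | refl => exact ⟨s, k, .refl⟩
  | tail _ h ih =>
    obtain ⟨s1, h1, h2⟩ := ih
    obtain ⟨s2, h3, h4⟩ := L_step h h1
    exact ⟨s2, h3, h2.trans h4⟩

theorem L_total {a b t : Tm} (h : L a t) (k : L b t) : L a b ∨ L b a := by
  induction h with
  | refl => exact .inr k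
  | mul r h ih =>
    cases k with
    | refl => exact .inl (h.mul r)
    | mul _ k => exact ih k

theorem compare (a b : Tm) : ∃ a' b', E a a' ∧ E b b' ∧ (L a' b' ∨ L b' a') := by
  obtain ⟨A, hA⟩ := absorb a
  obtain ⟨B, hB⟩ := absorb b
  obtain ⟨c, h1, h2⟩ := (hA (A + B) (by omega)).symm.trans (hB (A + B) (by omega))
  obtain ⟨a', h3, h4⟩ := L_E h1 (L.refl.mul _ : L a (m a _))
  obtain ⟨b', h5, h6⟩ := L_E h2 (L.refl.mul _ : L b (m b _))
  exact ⟨a', b', h4, h6, L_total h3 h5⟩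

/-- Evaluation. -/
def ev {S : Type*} [Shelf S] (g : S) : Tm → S
  | x => g
  | m a b => Shelf.act (ev g a) (ev g b)

theorem ev_step {S : Type*} [Shelf S] (g : S) {t t' : Tm} (h : Step t t') :
    ev g t = ev g t' := by
  induction h with
  | root a b c => exact Shelf.self_distrib
  | left b _ ih => simp only [ev, ih]
  | right a _ ih => simp only [ev, ih]

theorem ev_E {S : Type*} [Shelf S] (g : S) {t t' : Tm} (h : E t t') : ev g t = ev g t' := by
  induction h with
  | refl => rfl
  | tail _ h ih => exact ih.trans (ev_step g h)

theorem ev_L {S : Type*} [Shelf S] (g : S) {s t : Tm} (h : L s t) :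
    s = t ∨ TransGen (shelfDiv (S := S)) (ev g s) (ev g t) := by
  induction h with
  | refl => exact .inl rfl
  | @mul t r h ih =>
    right
    have h1 : shelfDiv (ev g t) (ev g (m t r)) := ⟨ev g r, rfl⟩
    rcases ih with rfl | ih
    · exact .single h1
    · exact ih.tail h1

theorem ev_compare {S : Type*} [Shelf S] (g : S) (a b : Tm) :
    TransGen (shelfDiv (S := S)) (ev g a) (ev g b) ∨ Q a b ∨ TransGen (shelfDiv (S := S)) (ev g b) (ev g a) := by
  obtain ⟨a', b', h1, h2, h⟩ := compare a b
  rw [ev_E g h1, ev_E g h2]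
  rcases h with h | h
  · rcases ev_L g h with rfl | h
    · exact .inr (.inl ⟨_, h1, h2⟩)
    · exact .inl h
  · rcases ev_L g h with rfl | h
    · exact .inr (.inl ⟨_, h1, h2⟩)
    · exact .inr (.inr h)

theorem ev_Q {S : Type*} [Shelf S] (g : S) {a b : Tm} : Q a b → ev g a = ev g b :=
  fun ⟨_, h, k⟩ => (ev_E g h).trans (ev_E g k).symm

end FreeShelfAux


/-- freeness criterion. If a left-shelf `S` is generated by a
single element `g` and the division relation has no cycle (`⊏*` is
irreflexive), then `⊏*` is a strict linear order satisfying (3.1), and `S`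
is free based on `g`. -/
theorem freeness_criterion {S : Type*} [Shelf S] (g : S)
    (hgen : ∀ P : S → Prop, P g →
      (∀ a b, P a → P b → P (Shelf.act a b)) → ∀ a, P a)
    (hirr : ∀ a : S, ¬ Relation.TransGen shelfDiv a a) :
    (∀ a : S, ¬ Relation.TransGen shelfDiv a a) ∧
    (∀ a b c : S, Relation.TransGen shelfDiv a b →
      Relation.TransGen shelfDiv b c → Relation.TransGen shelfDiv a c) ∧
    (∀ a b : S, Relation.TransGen shelfDiv a b ∨ a = b ∨
      Relation.TransGen shelfDiv b a) ∧
    (∀ a b : S, Relation.TransGen shelfDiv a (Shelf.act a b)) ∧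
    (∀ a b c : S, Relation.TransGen shelfDiv b c ↔
      Relation.TransGen shelfDiv (Shelf.act a b) (Shelf.act a c)) ∧
    (∀ (S' : Type*) [Shelf S'] (g' : S'),
      ∃ φ : S → S', φ g = g' ∧
        ∀ a b : S, φ (Shelf.act a b) = Shelf.act (φ a) (φ b)) := by
  have hsurj : ∀ a : S, ∃ t, FreeShelfAux.ev g t = a := by
    apply hgen
    · exact ⟨.x, rfl⟩
    · rintro _ _ ⟨s, rfl⟩ ⟨t, rfl⟩
      exact ⟨.m s t, rfl⟩
  have htot : ∀ a b : S, Relation.TransGen shelfDiv a b ∨ a = b ∨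
      Relation.TransGen shelfDiv b a := by
    intro a b
    obtain ⟨s, rfl⟩ := hsurj a
    obtain ⟨t, rfl⟩ := hsurj b
    rcases FreeShelfAux.ev_compare g s t with h | h | h
    · exact .inl h
    · exact .inr (.inl (FreeShelfAux.ev_Q g h))
    · exact .inr (.inr h)
  have hmono : ∀ a b c : S, Relation.TransGen shelfDiv b c →
      Relation.TransGen shelfDiv (Shelf.act a b) (Shelf.act a c) := by
    intro a b c h
    refine Relation.TransGen.lift (Shelf.act a) ?_ _ _ h
    rintro u _ ⟨y, rfl⟩
    exact ⟨Shelf.act a y, Shelf.self_distrib.symm⟩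
  refine ⟨hirr, fun a b c => Relation.TransGen.trans, htot,
    fun a b => .single ⟨b, rfl⟩, fun a b c => ⟨hmono a b c, fun h => ?_⟩, ?_⟩
  · rcases htot b c with k | rfl | k
    · exact k
    · exact (hirr _ h).elim
    · exact (hirr _ (h.trans (hmono a c b k))).elim
  · intro S' _ g'
    choose f hf using hsurj
    have key : ∀ s t, FreeShelfAux.ev g s = FreeShelfAux.ev g t →
        FreeShelfAux.ev g' s = FreeShelfAux.ev g' t := by
      intro s t h
      rcases FreeShelfAux.ev_compare g s t with k | k | k
      · rw [h] at k
        exact (hirr _ k).elim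
      · exact FreeShelfAux.ev_Q g' k
      · rw [h] at k
        exact (hirr _ k).elim
    refine ⟨fun a => FreeShelfAux.ev g' (f a), ?_, fun a b => ?_⟩
    · exact key (f g) .x (hf g)
    · refine key (f (Shelf.act a b)) (.m (f a) (f b)) ?_
      rw [hf]
      change _ = Shelf.act (FreeShelfAux.ev g (f a)) (FreeShelfAux.ev g (f b))
      rw [hf, hf]
end

section
/- For all braids β, β' ∈ B_∞, if β ⊏* β' holds in the braid shelf (B_∞, ▷), then β⁻¹β' is σ₁-positive. -/
/-- A braid is `σ₁`-positive if it can be written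
`sh γ₀ · σ₁ · sh γ₁ · σ₁ ⋯ σ₁ · sh γₙ` with `n ≥ 1` factors `σ₁`
(recall that `σ 0` is the paper's `σ₁`). -/
def sigma1Pos (β : Binf) : Prop :=
  ∃ (l : List Binf) (γ : Binf), l ≠ [] ∧
    β = (l.map (fun g => sh g * σ 0)).prod * sh γ

lemma sigma1Pos_mul {a b : Binf} (ha : sigma1Pos a) (hb : sigma1Pos b) :
    sigma1Pos (a * b) := by
  obtain ⟨l, γ, hl, rfl⟩ := ha
  obtain ⟨m, δ, hm, rfl⟩ := hb
  cases m with
  | nil => exact absurd rfl hm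
  | cons g m =>
    refine ⟨l ++ (γ * g) :: m, δ, by simp, ?_⟩
    simp [mul_assoc]

lemma sigma1Pos_sc (a x : Binf) : sigma1Pos (a⁻¹ * sc a x) :=
  ⟨[x], a⁻¹, by simp, by simp [sc, mul_assoc]⟩

/-- if `β ⊏* β'` in the braid shelf then `β⁻¹ β'` is
`σ₁`-positive. -/
theorem div_transGen_sigma1Pos (β β' : Binf)
    (h : Relation.TransGen (fun a b : Binf => ∃ x, sc a x = b) β β') :
    sigma1Pos (β⁻¹ * β') := by
  induction h with
  | single h =>
    obtain ⟨x, rfl⟩ := h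
    exact sigma1Pos_sc β x
  | @tail b c _ h ih =>
    obtain ⟨x, rfl⟩ := h
    have := sigma1Pos_mul ih (sigma1Pos_sc b x)
    simpa [mul_assoc] using this
end

section
/- A σ₁-positive braid is never trivial: for every n ≥ 1 and all γ₀, γ₁, …, γₙ ∈ B_∞, the braid sh(γ₀) · σ₁ · sh(γ₁) · σ₁ ⋯ σ₁ · sh(γₙ) (containing n factors σ₁) is not equal to the unit braid 1. -/
/-- The endomorphism `x_p ↦ x_p^e x_q x_p^{-e}`, `x_q ↦ x_p` of the free group. -/
def tauGen (p q : ℕ) (e : Bool) (n : ℕ) : FreeGroup ℕ :=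
  if n = p then FreeGroup.mk [(p, e)] * FreeGroup.of q * FreeGroup.mk [(p, !e)]
  else if n = q then FreeGroup.of p else FreeGroup.of n

def tau (p q : ℕ) (e : Bool) : FreeGroup ℕ →* FreeGroup ℕ := FreeGroup.lift (tauGen p q e)

/-- Reduced left multiplication by a letter. -/
def pushL (x : ℕ × Bool) : List (ℕ × Bool) → List (ℕ × Bool)
  | [] => [x]
  | y :: t => if x.1 = y.1 ∧ x.2 = !y.2 then t else x :: y :: t

lemma toWord_push (x : ℕ × Bool) (g : FreeGroup ℕ) :
    (FreeGroup.mk [x] * g).toWord = pushL x g.toWord := by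
  conv_lhs => rw [← FreeGroup.mk_toWord (x := g)]
  rw [FreeGroup.mul_mk, FreeGroup.toWord_mk, List.singleton_append, FreeGroup.reduce.cons,
    FreeGroup.reduce_toWord]
  cases g.toWord <;> simp [pushL]

lemma mk_of (n : ℕ) : FreeGroup.of n = FreeGroup.mk [(n, true)] := rfl

/-- image of a letter, acting on reduced words -/
def imgL (p q : ℕ) (e : Bool) (l : ℕ × Bool) (R : List (ℕ × Bool)) : List (ℕ × Bool) :=
  if l.1 = p then pushL (p, e) (pushL (q, l.2) (pushL (p, !e) R))
  else if l.1 = q then pushL (p, l.2) R else pushL l R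

lemma tau_cons (p q : ℕ) (e : Bool) (l : ℕ × Bool) (L : List (ℕ × Bool)) :
    (tau p q e (FreeGroup.mk (l :: L))).toWord
      = imgL p q e l (tau p q e (FreeGroup.mk L)).toWord := by
  have h : FreeGroup.mk (l :: L) = FreeGroup.mk [l] * FreeGroup.mk L := by
    rw [FreeGroup.mul_mk]; rfl
  rw [h, map_mul]
  obtain ⟨n, b⟩ := l
  unfold imgL
  have h2 : tau p q e (FreeGroup.mk [(n, b)]) =
      if n = p then FreeGroup.mk [(p, e)] * (FreeGroup.mk [(q, b)] * FreeGroup.mk [(p, !e)])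
      else if n = q then FreeGroup.mk [(p, b)] else FreeGroup.mk [(n, b)] := by
    cases b <;> cases e <;>
      simp only [tau, tauGen, FreeGroup.lift_mk, List.map_cons, List.map_nil, List.prod_cons,
        List.prod_nil, cond_true, cond_false, mul_one] <;> split_ifs <;>
      simp [mk_of, FreeGroup.inv_mk, FreeGroup.mul_mk, FreeGroup.invRev]
  rw [h2]
  dsimp only
  split_ifs
  · rw [mul_assoc, mul_assoc, toWord_push, toWord_push, toWord_push]
  · rw [toWord_push]
  · rw [toWord_push]

/-- The local invariant. -/
def TInv (p q : ℕ) (e : Bool) : List (ℕ × Bool) → List (ℕ × Bool) → Prop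
  | [], R => R = []
  | l :: _, R =>
    if l.1 = p then ∃ R', R = (p, e) :: (q, l.2) :: R'
    else if l.1 = q then
      if l.2 = e then R = [(p, e)] ∨
        ∃ r R', R = (p, e) :: r :: R' ∧ (r = (p, e) ∨ (r.1 ≠ p ∧ r.1 ≠ q))
      else ∃ r R', R = r :: R' ∧ (r = (p, !e) ∨ r.1 = q)
    else ∃ R', R = l :: R'

lemma TInv_step (p q : ℕ) (hpq : p ≠ q) (e : Bool) (l : ℕ × Bool) (L R : List (ℕ × Bool))
    (hred : FreeGroup.IsReduced (l :: L)) (h : TInv p q e L R) :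
    TInv p q e (l :: L) (imgL p q e l R) := by
  obtain ⟨n, b⟩ := l
  cases L with
  | nil =>
    simp only [TInv] at h
    subst h
    simp only [TInv, imgL]
    have hqp := hpq.symm
    cases b <;> cases e <;> split_ifs <;> simp_all [pushL]
  | cons m L =>
    obtain ⟨m, c⟩ := m
    have hmn : n = m → b = c := by
      have := hred
      simp only [FreeGroup.IsReduced, List.isChain_cons_cons] at this
      exact this.1
    clear hred
    have hqp := hpq.symm
    simp only [TInv] at h
    by_cases h1 : m = p
    · subst h1
      rw [if_pos rfl] at h
      obtain ⟨R', rfl⟩ := h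
      simp only [TInv, imgL]
      split_ifs <;> cases b <;> cases e <;> cases c <;> simp_all [pushL]
    rw [if_neg h1] at h
    by_cases h2 : m = q
    · subst h2
      rw [if_pos rfl] at h
      split_ifs at h with h3
      · subst h3
        rcases h with rfl | ⟨⟨r, d⟩, R', rfl, h⟩
        · simp only [TInv, imgL]
          split_ifs <;> cases b <;> cases c <;> simp_all [pushL]
        · simp only [TInv, imgL]
          rcases h with h | ⟨h, h'⟩
          · obtain ⟨rfl, rfl⟩ := Prod.mk.inj h
            clear h
            by_cases kr : n = r
            · subst kr
              cases b <;> cases d <;> simp_all [pushL]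
            by_cases km : n = m
            · subst km
              cases b <;> cases d <;> simp_all [pushL]
            have k6 := Ne.symm kr
            have k7 := Ne.symm km
            cases b <;> cases d <;> simp_all [pushL]
          · have h4 := Ne.symm h
            have h5 := Ne.symm h'
            dsimp only at h h' h4 h5
            by_cases kp : n = p
            · subst kp
              cases b <;> cases c <;> simp_all [pushL]
            by_cases km : n = m
            · subst km
              cases b <;> cases c <;> simp_all [pushL]
            by_cases kr : n = r
            · subst kr
              cases b <;> cases c <;> cases d <;> simp_all [pushL]
            have k8 := Ne.symm kr
            have k6 := Ne.symm kp
            have k7 := Ne.symm km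
            cases b <;> cases c <;> simp_all [pushL]
      · obtain ⟨⟨r, d⟩, R', rfl, h⟩ := h
        simp only [TInv, imgL]
        rcases h with h | h
        · obtain ⟨rfl, rfl⟩ := Prod.mk.inj h
          clear h
          by_cases kr : n = r
          · subst kr
            cases b <;> cases c <;> cases e <;> simp_all [pushL]
          by_cases km : n = m
          · subst km
            cases b <;> cases c <;> cases e <;> simp_all [pushL]
          have k6 := Ne.symm kr
          have k7 := Ne.symm km
          cases b <;> cases c <;> cases e <;> simp_all [pushL]
        · dsimp only at h
          subst h
          by_cases kp : n = p
          · subst kp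
            cases b <;> cases c <;> cases e <;> cases d <;> simp_all [pushL]
          by_cases km : n = r
          · subst km
            cases b <;> cases c <;> cases e <;> cases d <;> simp_all [pushL]
          have k6 := Ne.symm kp
          have k7 := Ne.symm km
          cases b <;> cases c <;> cases e <;> cases d <;> simp_all [pushL]
    rw [if_neg h2] at h
    obtain ⟨R', rfl⟩ := h
    have h4 := Ne.symm h1
    have h5 := Ne.symm h2
    simp only [TInv, imgL]
    by_cases h6 : n = p
    · subst h6
      simp_all [pushL]
    by_cases h7 : n = q
    · subst h7
      cases b <;> cases c <;> cases e <;> simp_all [pushL]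
    by_cases h8 : n = m
    · subst h8
      cases b <;> cases c <;> simp_all [pushL]
    · simp_all [pushL]

lemma TInv_all (p q : ℕ) (hpq : p ≠ q) (e : Bool) (L : List (ℕ × Bool))
    (hred : FreeGroup.IsReduced L) : TInv p q e L (tau p q e (FreeGroup.mk L)).toWord := by
  induction L with
  | nil => simp [TInv, ← FreeGroup.one_eq_mk]
  | cons l L ih =>
    rw [tau_cons]
    exact TInv_step p q hpq e l L _ hred (ih (List.IsChain.tail hred))

/-- The reduced word of `g` starts with `x_0`. -/
def StartsA (g : FreeGroup ℕ) : Prop := ∃ R, g.toWord = (0, true) :: R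

lemma startsA_tau (p q : ℕ) (hpq : p ≠ q) (e : Bool) (h0 : (p = 0 ∧ e = true) ∨ (p ≠ 0 ∧ q ≠ 0))
    (g : FreeGroup ℕ) (hg : StartsA g) : StartsA (tau p q e g) := by
  obtain ⟨R, hR⟩ := hg
  have h := TInv_all p q hpq e g.toWord FreeGroup.isReduced_toWord
  rw [FreeGroup.mk_toWord, hR] at h
  simp only [TInv] at h
  rcases h0 with ⟨rfl, rfl⟩ | ⟨h1, h2⟩
  · rw [if_pos rfl] at h
    obtain ⟨R', h⟩ := h
    exact ⟨_, h⟩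
  · rw [if_neg h1.symm, if_neg h2.symm] at h
    exact h

lemma tau_of (p q : ℕ) (e : Bool) (n : ℕ) : tau p q e (FreeGroup.of n) = tauGen p q e n := by
  simp [tau]

lemma mk_false (n : ℕ) : FreeGroup.mk [(n, false)] = (FreeGroup.of n)⁻¹ := rfl

lemma tau_of_true (p q n : ℕ) : tau p q true (FreeGroup.of n) =
    if n = p then FreeGroup.of p * FreeGroup.of q * (FreeGroup.of p)⁻¹
    else if n = q then FreeGroup.of p else FreeGroup.of n := by
  rw [tau_of]; rfl

lemma tau_of_false (p q n : ℕ) : tau p q false (FreeGroup.of n) =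
    if n = p then (FreeGroup.of p)⁻¹ * FreeGroup.of q * FreeGroup.of p
    else if n = q then FreeGroup.of p else FreeGroup.of n := by
  rw [tau_of]; rfl

/-- The Artin automorphism. -/
def artin (i : ℕ) : MulAut (FreeGroup ℕ) :=
  MonoidHom.toMulEquiv (tau i (i + 1) true) (tau (i + 1) i false)
    (by
      apply FreeGroup.ext_hom
      intro n
      by_cases h1 : n = i
      · subst h1; simp [tau_of_true, tau_of_false, mul_assoc]
      by_cases h2 : n = i + 1
      · subst h2; simp [tau_of_true, tau_of_false]
      · simp [tau_of_true, tau_of_false, h1, h2])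
    (by
      apply FreeGroup.ext_hom
      intro n
      by_cases h1 : n = i
      · subst h1; simp [tau_of_true, tau_of_false]
      by_cases h2 : n = i + 1
      · subst h2; simp [tau_of_true, tau_of_false, mul_assoc]
      · simp [tau_of_true, tau_of_false, h1, h2])

lemma artin_apply (i : ℕ) (g : FreeGroup ℕ) : artin i g = tau i (i + 1) true g := rfl
lemma artin_inv_apply (i : ℕ) (g : FreeGroup ℕ) : (artin i)⁻¹ g = tau (i + 1) i false g := rfl

lemma artin_of (i n : ℕ) : artin i (FreeGroup.of n) =
    if n = i then FreeGroup.of i * FreeGroup.of (i + 1) * (FreeGroup.of i)⁻¹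
    else if n = i + 1 then FreeGroup.of i else FreeGroup.of n := by
  rw [artin_apply, tau_of_true]

lemma mulAut_ext {f g : MulAut (FreeGroup ℕ)}
    (h : ∀ n, f (FreeGroup.of n) = g (FreeGroup.of n)) : f = g := by
  have : f.toMonoidHom = g.toMonoidHom := FreeGroup.ext_hom _ _ h
  ext x
  exact DFunLike.congr_fun this x

lemma artin_comm (i j : ℕ) (h : i + 2 ≤ j) : artin i * artin j = artin j * artin i := by
  apply mulAut_ext
  intro n
  have a1 : i ≠ j := by omega
  have a2 : i ≠ j + 1 := by omega
  have a3 : i + 1 ≠ j := by omega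
  have a5 : j ≠ i := by omega
  have a6 : j ≠ i + 1 := by omega
  have a7 : j + 1 ≠ i := by omega
  simp only [MulAut.mul_apply, artin_of]
  split_ifs <;> first | omega | simp_all [artin_of]

lemma artin_braid (i : ℕ) : artin i * artin (i + 1) * artin i
    = artin (i + 1) * artin i * artin (i + 1) := by
  apply mulAut_ext
  intro n
  simp only [MulAut.mul_apply]
  have e1 : i ≠ i + 1 + 1 := by omega
  have e2 : i + 1 + 1 ≠ i := by omega
  by_cases h1 : n = i
  · subst h1; simp [artin_of, mul_assoc, e1, e2]
  by_cases h2 : n = i + 1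
  · subst h2; simp [artin_of, mul_assoc, e1, e2]
  by_cases h3 : n = i + 2
  · subst h3; simp [artin_of, e1]
  · simp [artin_of, h1, h2, h3]

lemma artin_rels : ∀ r ∈ braidRels, FreeGroup.lift artin r = 1 := by
  rintro r (⟨i, j, hij, rfl⟩ | ⟨i, rfl⟩)
  · simp only [map_mul, map_inv, FreeGroup.lift_apply_of, artin_comm i j hij]
    group
  · simp only [map_mul, map_inv, FreeGroup.lift_apply_of, artin_braid i]
    group

/-- The Artin representation. -/
def artinRep : Binf →* MulAut (FreeGroup ℕ) := PresentedGroup.toGroup artin_rels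

lemma artinRep_σ (i : ℕ) : artinRep (σ i) = artin i := PresentedGroup.toGroup.of artin_rels

lemma Binf_ind {C : Binf → Prop} (h1 : C 1) (ho : ∀ i, C (σ i)) (hi : ∀ i, C (σ i)⁻¹)
    (hm : ∀ x y, C x → C y → C (x * y)) (g : Binf) : C g := by
  obtain ⟨w, rfl⟩ := PresentedGroup.mk_surjective braidRels g
  induction w using FreeGroup.induction_on with
  | C1 => simpa using h1
  | of i => exact ho i
  | inv_of i _ => exact hi i
  | mul x y hx hy => rw [map_mul]; exact hm _ _ hx hy

lemma sh_good (g : Binf) : artinRep (sh g) (FreeGroup.of 0) = FreeGroup.of 0 ∧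
    ∀ w, StartsA w → StartsA (artinRep (sh g) w) := by
  induction g using Binf_ind with
  | h1 => simp
  | ho i =>
    rw [sh_σ, artinRep_σ]
    refine ⟨by simp [artin_of], fun w hw => ?_⟩
    rw [artin_apply]
    exact startsA_tau _ _ (by omega) _ (Or.inr ⟨by omega, by omega⟩) w hw
  | hi i =>
    rw [map_inv, map_inv, sh_σ, artinRep_σ]
    refine ⟨by rw [artin_inv_apply, tau_of_false]; simp, fun w hw => ?_⟩
    rw [artin_inv_apply]
    exact startsA_tau _ _ (by omega) _ (Or.inr ⟨by omega, by omega⟩) w hw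
  | hm x y hx hy =>
    simp only [map_mul, MulAut.mul_apply]
    exact ⟨by rw [hy.1, hx.1], fun w hw => hx.2 _ (hy.2 _ hw)⟩

lemma startsA_artin_zero (w : FreeGroup ℕ) (hw : StartsA w) : StartsA (artin 0 w) :=
  startsA_tau _ _ (by omega) _ (Or.inl ⟨rfl, rfl⟩) w hw

lemma startsA_base : StartsA (artin 0 (FreeGroup.of 0)⁻¹) := by
  refine ⟨[(1, false), (0, false)], ?_⟩
  rw [map_inv, artin_of]
  decide

lemma startsA_prod (l : List Binf) (hl : l ≠ []) :
    StartsA (artinRep (l.map (fun g => sh g * σ 0)).prod (FreeGroup.of 0)⁻¹) := by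
  induction l with
  | nil => exact absurd rfl hl
  | cons a l ih =>
    simp only [List.map_cons, List.prod_cons, map_mul, MulAut.mul_apply, artinRep_σ]
    apply (sh_good a).2
    by_cases h : l = []
    · subst h
      simpa using startsA_base
    · exact startsA_artin_zero _ (ih h)

/-- a `σ₁`-positive braid is never trivial: for `n ≥ 1` and
`γ₀, …, γₙ ∈ Binf` (here `l = [γ₀, …, γ_{n-1}]`, `γ = γₙ`, `n = l.length`),
the braid `sh γ₀ · σ₁ · sh γ₁ · σ₁ ⋯ σ₁ · sh γₙ` is not `1`. -/
theorem sigma1_positive_ne_one (l : List Binf) (γ : Binf) (hl : l ≠ []) :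
    (l.map (fun g => sh g * σ 0)).prod * sh γ ≠ 1 := by
  intro h
  have h2 := startsA_prod l hl
  have h3 : artinRep ((l.map (fun g => sh g * σ 0)).prod * sh γ) (FreeGroup.of 0)⁻¹
      = (FreeGroup.of 0)⁻¹ := by rw [h]; simp
  rw [map_mul, MulAut.mul_apply, map_inv (artinRep (sh γ)), (sh_good γ).1] at h3
  rw [h3] at h2
  obtain ⟨R, hR⟩ := h2
  simp [FreeGroup.toWord_inv, FreeGroup.invRev] at hR
end

section
/- Division has no cycle in the braid shelf: there is no braid β ∈ B_∞ with β ⊏* β; that is, the transitive closure ⊏* of the division relation of (B_∞, ▷) is irreflexive. -/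
namespace BraidAcyclic

open FreeGroup hiding map_mul map_inv map_one

lemma mk_cons_true (i : ℕ) (T : List (ℕ × Bool)) : mk ((i, true) :: T) = of i * mk T := rfl
lemma mk_cons_false (i : ℕ) (T : List (ℕ × Bool)) :
    mk ((i, false) :: T) = (of i)⁻¹ * mk T := rfl
lemma mk_nil' : mk ([] : List (ℕ × Bool)) = 1 := rfl

/-- The Artin substitution: `x_i ↦ x_i^e x_j x_i^{-e}`, `x_j ↦ x_i`. -/
def tw (i j : ℕ) (s : Bool) : FreeGroup ℕ →* FreeGroup ℕ :=
  FreeGroup.lift fun n =>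
    if n = i then mk [(i, s), (j, true), (i, !s)] else if n = j then of i else of n

lemma tw_of (i j : ℕ) (s : Bool) (n : ℕ) : tw i j s (of n) =
    if n = i then mk [(i, s), (j, true), (i, !s)] else if n = j then of i else of n := by
  simp [tw]

/-- Relation between the head of a reduced word and the head of its reduced image. -/
def Good (i j : ℕ) (s : Bool) : List (ℕ × Bool) → List (ℕ × Bool) → Prop
  | [], M => M = []
  | c :: _, M =>
    (c = (i, s) ∧ ∃ T, M = (i, s) :: (j, s) :: T) ∨
    (c = (i, !s) ∧ ∃ T, M = (i, s) :: (j, !s) :: T) ∨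
    (c = (j, s) ∧ ∃ T, M = (i, s) :: T ∧
      ∀ d ∈ T.head?, d ≠ (i, !s) ∧ d ≠ (j, s) ∧ d ≠ (j, !s)) ∨
    (c = (j, !s) ∧ ∃ d T, M = d :: T ∧ (d = (i, !s) ∨ d = (j, s) ∨ d = (j, !s))) ∨
    (c.1 ≠ i ∧ c.1 ≠ j ∧ ∃ T, M = c :: T)

lemma red_cons (c : ℕ × Bool) (L : List (ℕ × Bool)) :
    IsReduced (c :: L) ↔ (∀ d ∈ L.head?, c.1 = d.1 → c.2 = d.2) ∧ IsReduced L := by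
  unfold FreeGroup.IsReduced
  rw [List.isChain_cons]

lemma good_step (i j : ℕ) (hij : i ≠ j) (s : Bool) (c : ℕ × Bool) (L M : List (ℕ × Bool))
    (hL : IsReduced (c :: L)) (hM : IsReduced M) (h : Good i j s L M) :
    ∃ M', IsReduced M' ∧ mk M' = tw i j s (mk [c]) * mk M ∧ Good i j s (c :: L) M' := by
  have hji := hij.symm
  obtain ⟨n, e⟩ := c
  by_cases hni : n = i
  · subst hni
    cases L with
    | nil =>
      simp only [Good] at h
      subst h
      refine ⟨[(n, s), (j, e), (n, !s)], ?_, ?_, ?_⟩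
      · simp [red_cons, hij, hji]
      · cases s <;> cases e <;>
          simp [mk_cons_true, mk_cons_false, mk_nil', tw_of, mul_assoc]
      · cases s <;> cases e <;> simp [Good, hij]
    | cons d L =>
      rcases h with ⟨rfl, T, rfl⟩ | ⟨rfl, T, rfl⟩ | ⟨rfl, T, rfl, hT⟩ | ⟨rfl, d', T, rfl, hd⟩ |
        ⟨h1, h2, T, rfl⟩
      · refine ⟨(n, s) :: (j, e) :: (j, s) :: T, ?_, ?_, ?_⟩
        · cases s <;> cases e <;> simp_all [red_cons]
        · cases s <;> cases e <;>
            simp [mk_cons_true, mk_cons_false, mk_nil', tw_of, mul_assoc]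
        · cases s <;> cases e <;> simp_all [Good, red_cons]
      · refine ⟨(n, s) :: (j, e) :: (j, !s) :: T, ?_, ?_, ?_⟩
        · cases s <;> cases e <;> simp_all [red_cons]
        · cases s <;> cases e <;>
            simp [mk_cons_true, mk_cons_false, mk_nil', tw_of, mul_assoc]
        · cases s <;> cases e <;> simp_all [Good, red_cons]
      · refine ⟨(n, s) :: (j, e) :: T, ?_, ?_, ?_⟩
        · rw [red_cons] at hM
          rw [red_cons, red_cons]
          refine ⟨by simp [hij], ?_, hM.2⟩
          rintro ⟨a, b⟩ hd h1
          have := hT _ hd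
          cases s <;> cases b <;> simp_all
        · cases s <;> cases e <;>
            simp [mk_cons_true, mk_cons_false, mk_nil', tw_of, mul_assoc]
        · cases s <;> cases e <;> simp_all [Good]
      · refine ⟨(n, s) :: (j, e) :: (n, !s) :: d' :: T, ?_, ?_, ?_⟩
        · rcases hd with rfl | rfl | rfl <;> simp_all [red_cons]
        · cases s <;> cases e <;>
            simp [mk_cons_true, mk_cons_false, mk_nil', tw_of, mul_assoc] <;> rfl
        · cases s <;> cases e <;> simp_all [Good]
      · refine ⟨(n, s) :: (j, e) :: (n, !s) :: d :: T, ?_, ?_, ?_⟩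
        · simp_all [red_cons]
          intro h; exact absurd h.symm h1
        · cases s <;> cases e <;>
            simp [mk_cons_true, mk_cons_false, mk_nil', tw_of, mul_assoc] <;> rfl
        · cases s <;> cases e <;> simp_all [Good]
  by_cases hnj : n = j
  · subst hnj
    by_cases hes : e = s
    · subst hes
      refine ⟨(i, e) :: M, ?_, ?_, ?_⟩
      · cases L with
        | nil => simp only [Good] at h; subst h; simp [red_cons]
        | cons d L =>
          rcases h with ⟨rfl, T, rfl⟩ | ⟨rfl, T, rfl⟩ | ⟨rfl, T, rfl, hT⟩ |
            ⟨rfl, d', T, rfl, hd⟩ | ⟨h1, h2, T, rfl⟩ <;> simp_all [red_cons]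
          intro h; exact absurd h.symm h1
      · cases e <;> simp [mk_cons_true, mk_cons_false, mk_nil', tw_of, hji]
      · cases L with
        | nil => simp only [Good] at h; subst h; simp [Good]
        | cons d L =>
          rcases h with ⟨rfl, T, rfl⟩ | ⟨rfl, T, rfl⟩ | ⟨rfl, T, rfl, hT⟩ |
            ⟨rfl, d', T, rfl, hd⟩ | ⟨h1, h2, T, rfl⟩
          · right; right; left
            refine ⟨rfl, _, rfl, ?_⟩
            simp only [List.head?_cons, Option.mem_some_iff]
            rintro d rfl
            simp [hij]
          · right; right; left
            refine ⟨rfl, _, rfl, ?_⟩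
            simp only [List.head?_cons, Option.mem_some_iff]
            rintro d rfl
            simp [hij]
          · right; right; left
            refine ⟨rfl, _, rfl, ?_⟩
            simp only [List.head?_cons, Option.mem_some_iff]
            rintro d rfl
            simp [hij]
          · simp [red_cons] at hL
          · right; right; left
            refine ⟨rfl, _, rfl, ?_⟩
            simp only [List.head?_cons, Option.mem_some_iff]
            rintro d' rfl
            refine ⟨?_, ?_, ?_⟩ <;> rintro rfl <;> simp_all
    · obtain rfl : e = !s := by cases e <;> cases s <;> simp_all
      cases L with
      | nil =>
        simp only [Good] at h; subst h
        refine ⟨[(i, !s)], by simp [red_cons], ?_, by simp [Good]⟩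
        cases s <;> simp [mk_cons_true, mk_cons_false, mk_nil', tw_of, hji]
      | cons d L =>
        rcases h with ⟨rfl, T, rfl⟩ | ⟨rfl, T, rfl⟩ | ⟨rfl, T, rfl, hT⟩ |
            ⟨rfl, d', T, rfl, hd⟩ | ⟨h1, h2, T, rfl⟩
        · refine ⟨(n, s) :: T, by simp_all [red_cons], ?_, by simp [Good]⟩
          cases s <;> simp [mk_cons_true, mk_cons_false, mk_nil', tw_of, hji]
        · refine ⟨(n, !s) :: T, by simp_all [red_cons], ?_, by simp [Good]⟩
          cases s <;> simp [mk_cons_true, mk_cons_false, mk_nil', tw_of, hji]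
        · simp [red_cons] at hL
        · refine ⟨(i, !s) :: d' :: T, ?_, ?_, by simp [Good]⟩
          · rcases hd with rfl | rfl | rfl <;> simp_all [red_cons]
          · cases s <;> simp [mk_cons_true, mk_cons_false, mk_nil', tw_of, hji] <;> rfl
        · refine ⟨(i, !s) :: d :: T, ?_, ?_, by simp [Good]⟩
          · simp_all [red_cons]
            intro h; exact absurd h.symm h1
          · cases s <;> simp [mk_cons_true, mk_cons_false, mk_nil', tw_of, hji] <;> rfl
  · refine ⟨(n, e) :: M, ?_, ?_, by simp [Good, hni, hnj]⟩
    · cases L with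
      | nil => simp only [Good] at h; subst h; simp [red_cons]
      | cons d L =>
        rcases h with ⟨rfl, T, rfl⟩ | ⟨rfl, T, rfl⟩ | ⟨rfl, T, rfl, hT⟩ |
            ⟨rfl, d', T, rfl, hd⟩ | ⟨h1, h2, T, rfl⟩
        · simp_all [red_cons]
        · simp_all [red_cons]
        · simp_all [red_cons]
        · rcases hd with rfl | rfl | rfl <;> simp_all [red_cons]
        · simp_all [red_cons]
    · cases e <;> simp [mk_cons_true, mk_cons_false, mk_nil', tw_of, hni, hnj]

lemma good_exists (i j : ℕ) (hij : i ≠ j) (s : Bool) (L : List (ℕ × Bool))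
    (hL : IsReduced L) :
    ∃ M, IsReduced M ∧ mk M = tw i j s (mk L) ∧ Good i j s L M := by
  induction L with
  | nil => exact ⟨[], IsReduced.nil, by simp [mk_nil'], by simp [Good]⟩
  | cons c L ih =>
    obtain ⟨M, h1, h2, h3⟩ := ih ((red_cons c L).1 hL).2
    obtain ⟨M', h4, h5, h6⟩ := good_step i j hij s c L M hL h1 h3
    refine ⟨M', h4, ?_, h6⟩
    rw [h5, h2, ← map_mul]; rfl

/-- Elements whose reduced word starts with `x_0`. -/
def S : Set (FreeGroup ℕ) := {w | w.toWord.head? = some (0, true)}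

lemma tw_S (i j : ℕ) (hij : i ≠ j) (s : Bool) (h : (i ≠ 0 ∧ j ≠ 0) ∨ (i = 0 ∧ s = true))
    {w : FreeGroup ℕ} (hw : w ∈ S) : tw i j s w ∈ S := by
  obtain ⟨M, h1, h2, h3⟩ := good_exists i j hij s w.toWord isReduced_toWord
  rw [mk_toWord] at h2
  unfold S at hw ⊢
  simp only [Set.mem_ofPred_eq] at hw ⊢
  rw [← h2, toWord_mk, h1.reduce_eq]
  cases hL : w.toWord with
  | nil => simp [hL] at hw
  | cons c L =>
    rw [hL] at h3 hw
    simp only [List.head?_cons, Option.some.injEq] at hw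
    subst hw
    rcases h with ⟨hi, hj⟩ | ⟨rfl, rfl⟩
    · rcases h3 with ⟨h, -⟩ | ⟨h, -⟩ | ⟨h, -⟩ | ⟨h, -⟩ | ⟨-, -, T, rfl⟩
      all_goals first | rfl | (simp at h; omega)
    · rcases h3 with ⟨h, T, rfl⟩ | ⟨h, -⟩ | ⟨h, -⟩ | ⟨h, -⟩ | ⟨h, -, T, rfl⟩
      all_goals simp_all

/-- The Artin automorphism attached to `σ i`. -/
def art (i : ℕ) : MulAut (FreeGroup ℕ) :=
  MonoidHom.toMulEquiv (tw i (i + 1) true) (tw (i + 1) i false)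
    (by
      apply FreeGroup.ext_hom
      intro n
      by_cases h1 : n = i
      · subst h1; simp [tw_of, mk_cons_true, mk_cons_false, mk_nil', mul_assoc]
      by_cases h2 : n = i + 1
      · subst h2; simp [tw_of, mk_cons_true, mk_cons_false, mk_nil', mul_assoc]
      simp [tw_of, h1, h2])
    (by
      apply FreeGroup.ext_hom
      intro n
      by_cases h1 : n = i
      · subst h1; simp [tw_of, mk_cons_true, mk_cons_false, mk_nil', mul_assoc]
      by_cases h2 : n = i + 1
      · subst h2; simp [tw_of, mk_cons_true, mk_cons_false, mk_nil', mul_assoc]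
      simp [tw_of, h1, h2])

lemma art_apply (i : ℕ) (w : FreeGroup ℕ) : art i w = tw i (i + 1) true w := rfl
lemma art_inv_apply (i : ℕ) (w : FreeGroup ℕ) : (art i)⁻¹ w = tw (i + 1) i false w := rfl

lemma aut_ext {f g : MulAut (FreeGroup ℕ)} (h : ∀ n, f (of n) = g (of n)) : f = g := by
  have : f.toMonoidHom = g.toMonoidHom := FreeGroup.ext_hom _ _ h
  ext w
  exact DFunLike.congr_fun this w

lemma art_of (i n : ℕ) : art i (of n) =
    if n = i then of i * of (i + 1) * (of i)⁻¹ else if n = i + 1 then of i else of n := by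
  rw [art_apply, tw_of]
  simp [mk_cons_true, mk_cons_false, mk_nil', mul_assoc]

lemma art_comm (i j : ℕ) (h : i + 2 ≤ j) : art i * art j = art j * art i := by
  apply aut_ext
  intro n
  simp only [MulAut.mul_apply, art_of]
  have h1 : j ≠ i := by omega
  have h2 : j ≠ i + 1 := by omega
  have h3 : i ≠ j := by omega
  have h4 : i + 1 ≠ j := by omega
  have h5 : i ≠ j + 1 := by omega
  have h6 : j + 1 ≠ i := by omega
  by_cases a : n = i
  · subst a; simp [art_of, *]
  by_cases b : n = i + 1
  · subst b; simp [art_of, *]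
  by_cases c : n = j
  · subst c; simp [art_of, *]
  by_cases d : n = j + 1
  · subst d; simp [art_of, *]
  simp [art_of, *]

lemma art_braid (i : ℕ) :
    art i * art (i + 1) * art i = art (i + 1) * art i * art (i + 1) := by
  have h5 : i ≠ i + 1 + 1 := by omega
  have h6 : i + 1 + 1 ≠ i := by omega
  apply aut_ext
  intro n
  simp only [MulAut.mul_apply, art_of]
  by_cases a : n = i
  · subst a; simp [art_of, mul_assoc, h5, h6]
  by_cases b : n = i + 1
  · subst b; simp [art_of, mul_assoc, h5, h6]
  by_cases c : n = i + 2
  · subst c; simp [art_of, mul_assoc, h5, h6]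
  simp [art_of, *]

lemma art_rels : ∀ r ∈ braidRels, FreeGroup.lift art r = 1 := by
  rintro r (⟨i, j, h, rfl⟩ | ⟨i, rfl⟩)
  · simp only [map_mul, map_inv, FreeGroup.lift_apply_of]
    rw [art_comm i j h]; group
  · simp only [map_mul, map_inv, FreeGroup.lift_apply_of]
    rw [art_braid i, mul_inv_cancel]

/-- The Artin representation. -/
def rho : Binf →* MulAut (FreeGroup ℕ) := PresentedGroup.toGroup art_rels

lemma rho_σ (i : ℕ) : rho (σ i) = art i := PresentedGroup.toGroup.of art_rels

lemma binf_induction {P : Binf → Prop} (h1 : P 1) (hs : ∀ i b, P b → P (σ i * b))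
    (hi : ∀ i b, P b → P ((σ i)⁻¹ * b)) (b : Binf) : P b := by
  induction b using PresentedGroup.induction_on with
  | _ w =>
    obtain ⟨L⟩ := w
    induction L with
    | nil => exact h1
    | cons c L ih =>
      obtain ⟨n, e⟩ := c
      cases e
      · exact hi n _ ih
      · exact hs n _ ih

lemma rho_sh_S (b : Binf) {w : FreeGroup ℕ} (hw : w ∈ S) : rho (sh b) w ∈ S := by
  induction b using binf_induction with
  | h1 => simpa using hw
  | hs i b ih =>
    rw [map_mul, sh_σ, map_mul, rho_σ, MulAut.mul_apply, art_apply]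
    exact tw_S _ _ (by omega) _ (by left; omega) ih
  | hi i b ih =>
    rw [map_mul, map_inv, sh_σ, map_mul, map_inv, rho_σ, MulAut.mul_apply, art_inv_apply]
    exact tw_S _ _ (by omega) _ (by left; omega) ih

lemma rho_sh_fix (b : Binf) : rho (sh b) (of 0)⁻¹ = (of 0)⁻¹ := by
  induction b using binf_induction with
  | h1 => simp
  | hs i b ih =>
    rw [map_mul, sh_σ, map_mul, rho_σ, MulAut.mul_apply, ih, art_apply]
    simp [tw_of]
  | hi i b ih =>
    rw [map_mul, map_inv sh, sh_σ, map_mul, map_inv rho, rho_σ, MulAut.mul_apply, ih, art_inv_apply]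
    simp [tw_of]

lemma art_zero_p : art 0 (of 0)⁻¹ ∈ S := by
  rw [map_inv, art_of]
  simp only [if_true, S, Set.mem_ofPred_eq]
  decide

/-- Positivity: sends the base point into `S` and preserves `S`. -/
def Pos (b : Binf) : Prop := rho b (of 0)⁻¹ ∈ S ∧ ∀ w ∈ S, rho b w ∈ S

lemma pos_step (a x : Binf) : Pos (a⁻¹ * sc a x) := by
  have : a⁻¹ * sc a x = sh x * (σ 0 * sh a⁻¹) := by
    simp only [sc, map_inv]; group
  rw [this]
  simp only [Pos, map_mul rho, MulAut.mul_apply, rho_σ]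
  refine ⟨?_, fun w hw => ?_⟩
  · rw [rho_sh_fix]
    exact rho_sh_S _ art_zero_p
  · exact rho_sh_S _ (tw_S _ _ (by omega) _ (by right; simp) (rho_sh_S _ hw))

lemma pos_mul {a b : Binf} (ha : Pos a) (hb : Pos b) : Pos (a * b) := by
  simp only [Pos, map_mul rho, MulAut.mul_apply]
  exact ⟨ha.2 _ hb.1, fun w hw => ha.2 _ (hb.2 w hw)⟩

lemma not_pos_one : ¬ Pos 1 := by
  rintro ⟨h, -⟩
  rw [map_one, MulAut.one_apply] at h
  revert h
  simp only [S, Set.mem_ofPred_eq]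
  decide

lemma pos_trans {a b : Binf} (h : Relation.TransGen (fun a b : Binf => ∃ x, sc a x = b) a b) :
    Pos (a⁻¹ * b) := by
  induction h with
  | single h => obtain ⟨x, rfl⟩ := h; exact pos_step a x
  | @tail b c _ h ih =>
    obtain ⟨x, rfl⟩ := h
    have := pos_mul ih (pos_step b x)
    rwa [mul_assoc, mul_inv_cancel_left] at this

end BraidAcyclic

/-- division has no cycle in the braid shelf: the transitive
closure of the division relation is irreflexive. -/
theorem braid_division_acyclic (β : Binf) :
    ¬ Relation.TransGen (fun a b : Binf => ∃ x, sc a x = b) β β := by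
  intro h
  have := BraidAcyclic.pos_trans h
  rw [inv_mul_cancel] at this
  exact BraidAcyclic.not_pos_one this
end
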